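/- Let P be a simple 3-polytope with p_3 = 0. If a 3-loop L_3 = (F_i, F_j, F_k) is not a 3-belt, then F_i ∩ F_j ∩ F_k is a vertex, and L_3 borders a k-loop with k = s_i + s_j + s_k − 9 ≥ 3, where s_i, s_j, s_k are the numbers of edges of F_i, F_j, F_k. -/

import Mathlib

open Set

noncomputable section

/-- The ambient space `ℝ³`. -/
abbrev E3 := EuclideanSpace ℝ (Fin 3)

/-- The cyclic successor in `Fin k`. -/
def nxt {k : ℕ} (i : Fin k) : Fin k := ⟨(i.1 + 1) % k, Nat.mod_lt _ i.pos⟩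

/-- The cyclic predecessor in `Fin k`. -/
def prv {k : ℕ} (i : Fin k) : Fin k := ⟨(i.1 + (k - 1)) % k, Nat.mod_lt _ i.pos⟩

/-- A convex polytope in `ℝ³`: the convex hull of a finite set of points. -/
def IsPolytope (P : Set E3) : Prop := ∃ V : Finset E3, P = convexHull ℝ (V : Set E3)

/-- The dimension of a subset of `ℝ³` (the dimension of its affine hull). -/
def setDim (A : Set E3) : ℕ := Module.finrank ℝ ↥(vectorSpan ℝ A)

/-- A face of a polytope: a nonempty closed convex extreme subset. -/
def IsFaceOf (F P : Set E3) : Prop :=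
  F.Nonempty ∧ IsClosed F ∧ Convex ℝ F ∧ IsExtreme ℝ P F

/-- A facet: a `2`-dimensional face. -/
def IsFacetOf (F P : Set E3) : Prop := IsFaceOf F P ∧ setDim F = 2

/-- An edge: a `1`-dimensional face. -/
def IsEdgeOf (F P : Set E3) : Prop := IsFaceOf F P ∧ setDim F = 1

/-- A vertex: a point whose singleton is a face. -/
def IsVertexOf (v : E3) (P : Set E3) : Prop := IsFaceOf {v} P

/-- The set of facets of `P`. -/
def facets (P : Set E3) : Set (Set E3) := {F | IsFacetOf F P}

/-- A simple 3-polytope: a 3-dimensional convex polytope each of whose vertices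
is contained in exactly 3 facets. -/
def IsSimplePolytope3 (P : Set E3) : Prop :=
  IsPolytope P ∧ setDim P = 3 ∧
    ∀ v : E3, IsVertexOf v P → {F | IsFacetOf F P ∧ v ∈ F}.ncard = 3

/-- The number of edges of a facet `F` of `P`. -/
def facetEdges (P F : Set E3) : ℕ := {e | IsEdgeOf e P ∧ e ⊆ F}.ncard

/-- `pVec P k` is the number of `k`-gonal facets of `P`. -/
def pVec (P : Set E3) (k : ℕ) : ℕ := {F | IsFacetOf F P ∧ facetEdges P F = k}.ncard

/-- A (mathematical) fullerene: a simple 3-polytope with all facets pentagons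
and hexagons. -/
def IsFullerene (P : Set E3) : Prop :=
  IsSimplePolytope3 P ∧ ∀ F, IsFacetOf F P → facetEdges P F = 5 ∨ facetEdges P F = 6

/-- A `k`-loop in `P` (`k ≥ 2`): a cyclic sequence of facets in which
(cyclically) consecutive facets intersect in an edge; a `1`-loop is a single facet. -/
def IsLoop (P : Set E3) {k : ℕ} (L : Fin k → Set E3) : Prop :=
  0 < k ∧ (∀ i, IsFacetOf (L i) P) ∧ (2 ≤ k → ∀ i, IsEdgeOf (L i ∩ L (nxt i)) P)

/-- A simple loop: a loop with pairwise different facets. -/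
def IsSimpleLoop (P : Set E3) {k : ℕ} (L : Fin k → Set E3) : Prop :=
  IsLoop P L ∧ Function.Injective L

/-- A `k`-belt (`k ≥ 3`): a `k`-loop such that for `k = 3` the three facets have empty
total intersection, and for `k ≥ 4` two facets intersect iff they are cyclically successive. -/
def IsBelt (P : Set E3) {k : ℕ} (L : Fin k → Set E3) : Prop :=
  3 ≤ k ∧ IsLoop P L ∧
    (k = 3 → ∀ i, L i ∩ L (nxt i) ∩ L (nxt (nxt i)) = ∅) ∧
    (4 ≤ k → ∀ p q, p ≠ q → ((L p ∩ L q).Nonempty ↔ q = nxt p ∨ p = nxt q))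

/-- A flag 3-polytope: a simple 3-polytope different from the tetrahedron
(i.e. not having exactly 4 facets) without 3-belts. -/
def IsFlag3Polytope (P : Set E3) : Prop :=
  IsSimplePolytope3 P ∧ (facets P).ncard ≠ 4 ∧ ∀ B : Fin 3 → Set E3, ¬ IsBelt P B

/-- `γ` is the simple edge-cycle of `P` traced by the cyclically ordered distinct
vertices `v 0, …, v (n-1)` (`n ≥ 3`), consecutive ones joined by edges of `P`. -/
def IsSimpleEdgeCycleVia (P γ : Set E3) {n : ℕ} (v : Fin n → E3) : Prop :=
  3 ≤ n ∧ Function.Injective v ∧ (∀ i, IsVertexOf (v i) P) ∧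
    (∀ i, IsEdgeOf (segment ℝ (v i) (v (nxt i))) P) ∧
    γ = ⋃ i, segment ℝ (v i) (v (nxt i))

/-- A simple edge-cycle in the graph of `P`. -/
def IsSimpleEdgeCycle (P γ : Set E3) : Prop :=
  ∃ (n : ℕ) (v : Fin n → E3), IsSimpleEdgeCycleVia P γ v

/-- `C` is a connected component of the set `A`. -/
def IsCompOf (C A : Set E3) : Prop := ∃ x ∈ A, C = connectedComponentIn A x

/-- The loop `L` is obtained by walking round the simple edge-cycle `γ` inside the
connected component `C` of `∂P ∖ γ`: the facets of `L` lie on the side `C`, and the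
edges of `γ`, in cyclic order, lie in the facets of `L` in cyclic order (the loop
index advancing exactly when the facet changes, and making exactly one turn). -/
def WalksRound (P γ C : Set E3) {k : ℕ} (L : Fin k → Set E3) : Prop :=
  IsLoop P L ∧ (∀ i, intrinsicInterior ℝ (L i) ⊆ C) ∧
    ∃ (n : ℕ) (v : Fin n → E3) (φ : Fin n → Fin k),
      IsSimpleEdgeCycleVia P γ v ∧
      (∀ i, segment ℝ (v i) (v (nxt i)) ⊆ L (φ i)) ∧
      (∀ i, φ (nxt i) = φ i ∨ φ (nxt i) = nxt (φ i)) ∧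
      Function.Surjective φ ∧
      (2 ≤ k → (Finset.univ.filter (fun i : Fin n => φ (nxt i) ≠ φ i)).card = k)

/-- Two loops border each other: they are obtained by walking round the same simple
edge-cycle `γ` in the two different connected components of `∂P ∖ γ`. -/
def Borders (P : Set E3) {k₁ k₂ : ℕ} (L₁ : Fin k₁ → Set E3) (L₂ : Fin k₂ → Set E3) : Prop :=
  ∃ γ C₁ C₂ : Set E3, IsCompOf C₁ (frontier P \ γ) ∧ IsCompOf C₂ (frontier P \ γ) ∧
    C₁ ≠ C₂ ∧ WalksRound P γ C₁ L₁ ∧ WalksRound P γ C₂ L₂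

/-- A loop surrounds the facet `F` if it borders the `1`-loop `(F)`. -/
def Surrounds (P : Set E3) {k : ℕ} (L : Fin k → Set E3) (F : Set E3) : Prop :=
  IsFacetOf F P ∧ Borders P L (fun _ : Fin 1 => F)

/-- The number of edges of `P` lying in the facet `F` and in the set `γ`. -/
def edgesInCommon (P F γ : Set E3) : ℕ := {e | IsEdgeOf e P ∧ e ⊆ F ∧ e ⊆ γ}.ncard
/-- A simple 3-polytope all of whose facets are pentagons and hexagons except for
at most one exceptional facet, which is a quadrangle or a heptagon. -/
def IsAlmostFullerene (P : Set E3) : Prop :=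
  IsSimplePolytope3 P ∧
    (∀ F, IsFacetOf F P → facetEdges P F ∈ ({4, 5, 6, 7} : Set ℕ)) ∧
    {F | IsFacetOf F P ∧ (facetEdges P F = 4 ∨ facetEdges P F = 7)}.ncard ≤ 1

/-- The (combinatorial) dodecahedron: a simple 3-polytope with all facets pentagons. -/
def IsDodecahedron (P : Set E3) : Prop :=
  IsSimplePolytope3 P ∧ ∀ F, IsFacetOf F P → facetEdges P F = 5

/-- `e` and `e'` are opposite edges of the hexagonal facet `H`: they are disjoint and no
edge of `H` meets both of them. -/
def OppositeEdges (P H e e' : Set E3) : Prop :=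
  IsEdgeOf e P ∧ IsEdgeOf e' P ∧ e ⊆ H ∧ e' ⊆ H ∧ e ∩ e' = ∅ ∧
    ∀ e'', IsEdgeOf e'' P → e'' ⊆ H → (e'' ∩ e).Nonempty → e'' ≠ e → e'' ∩ e' = ∅

/-- A cap: a pentagonal facet `F₀` together with a surrounding 5-belt of pentagons. -/
def IsCapOf (P F₀ : Set E3) (L : Fin 5 → Set E3) : Prop :=
  IsFacetOf F₀ P ∧ facetEdges P F₀ = 5 ∧ (∀ i, facetEdges P (L i) = 5) ∧
    IsBelt P L ∧ Surrounds P L F₀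

/-- The number of 5-belts of `P` (counted as sets of facets). -/
def fiveBeltCount (P : Set E3) : ℕ :=
  {S : Set (Set E3) | ∃ B : Fin 5 → Set E3, IsBelt P B ∧ S = Set.range B}.ncard

/-- The structure of the `k`-th fullerene of Family I: two caps separated by `k`
hexagonal 5-belts, each bordering the next (for `k = 0` the caps border each other,
giving the dodecahedron). -/
def FamilyI (P : Set E3) (k : ℕ) : Prop :=
  ∃ (F₀ F₀' : Set E3) (L L' : Fin 5 → Set E3) (B : ℕ → Fin 5 → Set E3),
    IsCapOf P F₀ L ∧ IsCapOf P F₀' L' ∧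
    (∀ i < k, IsBelt P (B i) ∧ ∀ j, facetEdges P (B i j) = 6) ∧
    (∀ i, i + 1 < k → Borders P (B i) (B (i + 1))) ∧
    (0 < k → Borders P L (B 0) ∧ Borders P (B (k - 1)) L') ∧
    (k = 0 → Borders P L L') ∧
    facets P = {F₀, F₀'} ∪ Set.range L ∪ Set.range L' ∪ ⋃ i ∈ Set.Iio k, Set.range (B i)

/-- `P` is obtained from `Q` by an `(s,k;t₀,t₁)`-truncation with new edge `Enew`:
`P` is cut off from `Q` by a halfspace `{f ≤ c}` whose boundary plane crosses exactly
two edges `E₀ ≠ E₁` of a `k`-gonal facet `F` of `Q`, cutting off exactly `s` vertices,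
all belonging to `F`; `G₀` and `G₁` are the facets meeting `F` along `E₀` and `E₁`, and
they are `t₀`- and `t₁`-gons; `Enew` is the new edge dividing `F`. -/
def IsTruncation (s k t₀ t₁ : ℕ) (Q P Enew : Set E3) : Prop :=
  IsSimplePolytope3 Q ∧ IsSimplePolytope3 P ∧
    ∃ (F E₀ E₁ G₀ G₁ : Set E3) (f : E3 →ₗ[ℝ] ℝ) (c : ℝ),
      IsFacetOf F Q ∧ facetEdges Q F = k ∧
      IsEdgeOf E₀ Q ∧ IsEdgeOf E₁ Q ∧ E₀ ≠ E₁ ∧ E₀ ⊆ F ∧ E₁ ⊆ F ∧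
      IsFacetOf G₀ Q ∧ IsFacetOf G₁ Q ∧ G₀ ≠ F ∧ G₁ ≠ F ∧ E₀ ⊆ G₀ ∧ E₁ ⊆ G₁ ∧
      facetEdges Q G₀ = t₀ ∧ facetEdges Q G₁ = t₁ ∧
      P = Q ∩ {x | f x ≤ c} ∧
      (∀ e, IsEdgeOf e Q → (∃ x ∈ e, c < f x) → (∃ x ∈ e, f x < c) → e = E₀ ∨ e = E₁) ∧
      (∃ x ∈ E₀, c < f x) ∧ (∃ x ∈ E₀, f x < c) ∧
      (∃ x ∈ E₁, c < f x) ∧ (∃ x ∈ E₁, f x < c) ∧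
      (∀ v, IsVertexOf v Q → f v ≠ c) ∧
      {v | IsVertexOf v Q ∧ c < f v}.ncard = s ∧
      (∀ v, IsVertexOf v Q → c < f v → v ∈ F) ∧
      Enew = F ∩ {x | f x = c}

/-- Combinatorial equivalence of polytopes: an inclusion-preserving bijection
between the sets of faces. -/
def CombEquiv (P Q : Set E3) : Prop :=
  ∃ φ : {A : Set E3 // IsFaceOf A P} ≃ {A : Set E3 // IsFaceOf A Q},
    ∀ A B : {A : Set E3 // IsFaceOf A P}, A.1 ⊆ B.1 ↔ (φ A).1 ⊆ (φ B).1

/-- Combinatorial equivalence sending the face `Ep` of `P` to the face `Eq` of `Q`. -/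
def CombEquivMapping (P Q Ep Eq : Set E3) : Prop :=
  ∃ φ : {A : Set E3 // IsFaceOf A P} ≃ {A : Set E3 // IsFaceOf A Q},
    (∀ A B : {A : Set E3 // IsFaceOf A P}, A.1 ⊆ B.1 ↔ (φ A).1 ⊆ (φ B).1) ∧
    ∀ h : IsFaceOf Ep P, ((φ ⟨Ep, h⟩) : {A : Set E3 // IsFaceOf A Q}).1 = Eq

/-- The straightening of `P` along the edge `E` is defined: `P` is combinatorially
obtained from some simple 3-polytope `Q` by an `(s,k)`-truncation whose new edge
corresponds to `E`. -/
def StraighteningDefined (P E : Set E3) : Prop :=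
  ∃ (s k t₀ t₁ : ℕ) (Q P₁ E₁ : Set E3),
    IsTruncation s k t₀ t₁ Q P₁ E₁ ∧ CombEquivMapping P P₁ E E₁

/-- `P` is obtained from `Q` by one of the truncations
`(1;4,5)`, `(1;5,5)`, `(2,6;4,5)`, `(2,6;5,5)`, `(2,6;5,6)`, `(2,7;5,5)`, `(2,7;5,6)`. -/
def FullereneStep (Q P : Set E3) : Prop :=
  ∃ (s k t₀ t₁ : ℕ) (Enew : Set E3), IsTruncation s k t₀ t₁ Q P Enew ∧
    ((s = 1 ∧ (({t₀, t₁} : Finset ℕ) = {4, 5} ∨ ({t₀, t₁} : Finset ℕ) = {5, 5})) ∨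
     (s = 2 ∧ k = 6 ∧ (({t₀, t₁} : Finset ℕ) = {4, 5} ∨ ({t₀, t₁} : Finset ℕ) = {5, 5} ∨
        ({t₀, t₁} : Finset ℕ) = {5, 6})) ∨
     (s = 2 ∧ k = 7 ∧ (({t₀, t₁} : Finset ℕ) = {5, 5} ∨ ({t₀, t₁} : Finset ℕ) = {5, 6})))

/-!
Three pairwise adjacent facets that do not form a belt share a vertex `v`, and being the only
facets at `v` they meet in `v` alone. Their boundary polygons pair up along the three edges at `v`.
Deleting `v` from each polygon leaves three paths, each ending where the next one starts, which
close up to a cycle, the rim, with `(s₀ - 2) + (s₁ - 2) + (s₂ - 2)` edges.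

Behind each edge of the rim lies one further facet. At a vertex of the rim where two of the given
facets meet, there is room for one facet only behind both rim edges, so the facet behind the rim
does not change; at every other vertex of the rim it changes to an adjacent one. Three vertices are
of the first kind, so walking round outside the rim gives a loop of length `s₀ + s₁ + s₂ - 9`.

The rim is contained in the intersection of the union of the facets through `v` with the union of
the facets missing `v`, and in fact equal to it, so it separates `v` from the outer facets, while
every facet stays connected after removing the rim.
-/

/-! ### Extreme subsets of convex sets -/

section ConvexSets

variable {E : Type*} [NormedAddCommGroup E] [NormedSpace ℝ E]

lemma exists_mem_openSegment_of_mem_intrinsicInterior {F : Set E} {x y : E}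
    (hx : x ∈ intrinsicInterior ℝ F) (hy : y ∈ F) : ∃ z ∈ F, x ∈ openSegment ℝ y z := by
  obtain ⟨x, hxF, rfl⟩ := mem_intrinsicInterior.1 hx
  let line : ℝ → affineSpan ℝ F := fun t =>
    ⟨AffineMap.lineMap y (x : E) t, AffineMap.lineMap_mem t (subset_affineSpan ℝ F hy) x.2⟩
  have line_one : line 1 = x := Subtype.ext (AffineMap.lineMap_apply_one _ _)
  have line_cont : Continuous line := AffineMap.lineMap_continuous.subtype_mk _
  have line_near : ∀ᶠ t in nhdsWithin 1 (Ioi 1),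
      line t ∈ interior ((↑) ⁻¹' F : Set (affineSpan ℝ F)) :=
    ((line_cont.tendsto' 1 x line_one).eventually_mem
      (isOpen_interior.mem_nhds hxF)).filter_mono nhdsWithin_le_nhds
  obtain ⟨t, ht, h1t : 1 < t⟩ := (line_near.and self_mem_nhdsWithin).exists
  refine ⟨line t, interior_subset (s := ((↑) ⁻¹' F : Set (affineSpan ℝ F))) ht, ?_⟩
  have ht0 : 0 < t := one_pos.trans h1t
  refine ⟨1 - t⁻¹, t⁻¹, sub_pos.2 (inv_lt_one_of_one_lt₀ h1t), inv_pos.2 ht0,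
    sub_add_cancel _ _, ?_⟩
  simp only [line, AffineMap.lineMap_apply_module]
  match_scalars <;> field_simp
  ring

lemma subset_of_mem_intrinsicInterior_of_isExtreme {P F A : Set E} (hF : F ⊆ P)
    (hA : IsExtreme ℝ P A) {x : E} (hx : x ∈ intrinsicInterior ℝ F) (hxA : x ∈ A) : F ⊆ A := by
  intro y hy
  obtain ⟨z, hz, hxyz⟩ := exists_mem_openSegment_of_mem_intrinsicInterior hx hy
  exact hA.left_mem_of_mem_openSegment (hF hy) (hF hz) hxA hxyz

/-- Extreme sets missing a relatively interior point `x` of `F` cut no segment issuing from `x`,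
so they leave the rest of `F` star-shaped. -/
lemma isPathConnected_sdiff_iUnion_of_isExtreme [FiniteDimensional ℝ E] {ι : Sort*} {P F : Set E}
    {A : ι → Set E} (hF : F ⊆ P) (hconv : Convex ℝ F) (hne : F.Nonempty)
    (hA : ∀ i, IsExtreme ℝ P (A i)) (hFA : ∀ i, ¬ F ⊆ A i) : IsPathConnected (F \ ⋃ i, A i) := by
  obtain ⟨x, hx⟩ := hne.intrinsicInterior hconv
  have hxF : x ∈ F := intrinsicInterior_subset hx
  have hxA : ∀ i, x ∉ A i := fun i hxi =>
    hFA i (subset_of_mem_intrinsicInterior_of_isExtreme hF (hA i) hx hxi)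
  have hstar : StarConvex ℝ x (F \ ⋃ i, A i) := by
    rw [starConvex_iff_openSegment_subset (show x ∈ F \ ⋃ i, A i from ⟨hxF, by simpa using hxA⟩)]
    rintro y ⟨hyF, -⟩ z hz
    refine ⟨hconv.openSegment_subset hxF hyF hz, fun hzA => ?_⟩
    obtain ⟨i, hzi⟩ := mem_iUnion.1 hzA
    exact hxA i ((hA i).left_mem_of_mem_openSegment (hF hxF) (hF hyF) hzi hz)
  exact hstar.isPathConnected ⟨hxF, by simpa using hxA⟩

lemma eq_convexHull_inter_of_isExtreme {s F : Set E} (hconv : Convex ℝ F)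
    (hF : IsExtreme ℝ (convexHull ℝ s) F) : F = convexHull ℝ (s ∩ F) := by
  refine Subset.antisymm (fun x hx => ?_) (convexHull_min inter_subset_right hconv)
  have hrest : convexHull ℝ (s \ F) ⊆ convexHull ℝ s \ F :=
    convexHull_min (sdiff_subset_sdiff_left (subset_convexHull ℝ s))
      (hF.convex_sdiff (convex_convexHull ℝ s))
  have hxs : x ∈ convexHull ℝ ((s ∩ F) ∪ (s \ F)) := by
    rw [inter_union_sdiff]
    exact hF.subset hx
  rcases (s \ F).eq_empty_or_nonempty with h0 | hne'
  · rwa [h0, union_empty] at hxs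
  rcases (s ∩ F).eq_empty_or_nonempty with h0 | hne
  · rw [h0, empty_union] at hxs
    exact absurd hx (hrest hxs).2
  rw [convexHull_union hne hne', mem_convexJoin] at hxs
  obtain ⟨a, ha, b, hb, hxab⟩ := hxs
  rw [← insert_endpoints_openSegment] at hxab
  rcases hxab with rfl | rfl | hxab
  · exact ha
  · exact absurd hx (hrest hb).2
  · exact absurd (hF.right_mem_of_mem_openSegment
      (convexHull_mono inter_subset_left ha) (hrest hb).1 hx hxab) (hrest hb).2

lemma left_mem_extremePoints_segment (a b : E) : a ∈ (segment ℝ a b).extremePoints ℝ := by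
  by_contra ha
  have hb : (segment ℝ a b).extremePoints ℝ ⊆ {b} := fun x hx => by
    have hxab : x ∈ ({a, b} : Set E) := by
      rw [← convexHull_pair] at hx
      exact extremePoints_convexHull_subset hx
    exact hxab.resolve_left (fun h => ha (h ▸ hx))
  have hcomp : IsCompact (segment ℝ a b) := by
    rw [← convexHull_pair]
    exact (toFinite {a, b}).isCompact_convexHull (𝕜 := ℝ)
  have hab : segment ℝ a b ⊆ {b} := by
    rw [← closure_convexHull_extremePoints hcomp (convex_segment a b)]
    exact closure_minimal (convexHull_min hb (convex_singleton b)) isClosed_singleton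
  obtain rfl : a = b := hab (left_mem_segment ℝ a b)
  simp at ha

lemma extremePoints_segment (a b : E) : (segment ℝ a b).extremePoints ℝ = {a, b} := by
  refine Subset.antisymm ?_ ?_
  · rw [← convexHull_pair]
    exact extremePoints_convexHull_subset
  · rintro x (rfl | rfl)
    · exact left_mem_extremePoints_segment _ _
    · rw [segment_symm]
      exact left_mem_extremePoints_segment _ _

lemma segment_eq_segment_iff {a b c d : E} :
    segment ℝ a b = segment ℝ c d ↔ a = c ∧ b = d ∨ a = d ∧ b = c := by
  rw [← Set.pair_eq_pair_iff]
  constructor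
  · intro h
    rw [← extremePoints_segment, h, extremePoints_segment]
  · intro h
    rw [← convexHull_pair, h, convexHull_pair]

lemma segment_eq_segment_left_iff {a b c : E} : segment ℝ a b = segment ℝ a c ↔ b = c := by
  rw [segment_eq_segment_iff]
  grind

lemma exists_eq_segment_of_finrank_vectorSpan_eq_one {e : Set E} (hconv : Convex ℝ e)
    (hcomp : IsCompact e) (hdim : Module.finrank ℝ (vectorSpan ℝ e) = 1) :
    ∃ a b, a ≠ b ∧ e = segment ℝ a b := by
  obtain ⟨x, hx⟩ : e.Nonempty := by
    by_contra h0
    rw [not_nonempty_iff_eq_empty.1 h0, vectorSpan_empty, finrank_bot] at hdim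
    exact zero_ne_one hdim
  obtain ⟨⟨d, hd⟩, hd0, hspan⟩ := finrank_eq_one_iff'.1 hdim
  replace hd0 : d ≠ 0 := fun h => hd0 (Subtype.ext h)
  let line : ℝ →ᵃ[ℝ] E := AffineMap.lineMap x (x + d)
  have hline : ∀ t, line t = t • d + x := fun t => by simp [line, AffineMap.lineMap_apply]
  have line_emb : Topology.IsClosedEmbedding line := by
    rw [funext hline]
    exact (Homeomorph.addRight x).isClosedEmbedding.comp (isClosedEmbedding_smul_left hd0)
  have he : line '' (line ⁻¹' e) = e := by
    refine image_preimage_eq_of_subset fun y hy => ?_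
    obtain ⟨t, ht⟩ := hspan ⟨y - x, vsub_mem_vectorSpan ℝ hy hx⟩
    have htd : t • d = y - x := congrArg Subtype.val ht
    exact ⟨t, by rw [hline, htd, sub_add_cancel]⟩
  have hpre : IsConnected (line ⁻¹' e) :=
    (hconv.affine_preimage line).isConnected ⟨0, by simpa [hline] using hx⟩
  have hIcc := eq_Icc_of_connected_compact hpre (line_emb.isCompact_preimage hcomp)
  rw [← segment_eq_Icc (nonempty_Icc.1 (hIcc ▸ hpre.nonempty))] at hIcc
  have hseg : e = segment ℝ (line (sInf (line ⁻¹' e))) (line (sSup (line ⁻¹' e))) := by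
    rw [← image_segment, ← hIcc, he]
  refine ⟨_, _, fun hab => ?_, hseg⟩
  rw [hseg, hab, segment_same, vectorSpan_singleton, finrank_bot] at hdim
  exact zero_ne_one hdim

lemma exists_mem_forall_notMem_affineSubspace [FiniteDimensional ℝ E] {U : Set E} (hU : IsOpen U)
    (hne : U.Nonempty) {𝒜 : Set (AffineSubspace ℝ E)} (hcount : 𝒜.Countable)
    (hproper : ∀ A ∈ 𝒜, A ≠ ⊤) : ∃ p ∈ U, ∀ A ∈ 𝒜, p ∉ A := by
  let _ : MeasurableSpace E := borel E
  have : BorelSpace E := ⟨rfl⟩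
  have hnull : MeasureTheory.Measure.addHaar (⋃ A ∈ 𝒜, (A : Set E)) = 0 :=
    (MeasureTheory.measure_biUnion_null_iff hcount).2 fun A hA =>
      MeasureTheory.Measure.addHaar_affineSubspace _ A (hproper A hA)
  by_contra! hcover
  refine (hU.measure_pos MeasureTheory.Measure.addHaar hne).ne'
    (MeasureTheory.measure_mono_null (fun p hp => ?_) hnull)
  simpa using hcover p hp

lemma exists_supporting_functional_of_notMem_interior {P : Set E} (hconv : Convex ℝ P)
    (hint : (interior P).Nonempty) {y : E} (hy : y ∉ interior P) :
    ∃ l : E →L[ℝ] ℝ, l ≠ 0 ∧ ∀ z ∈ P, l z ≤ l y := by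
  obtain ⟨l, hl⟩ := geometric_hahn_banach_open_point hconv.interior isOpen_interior hy
  refine ⟨l, ?_, fun z hz => ?_⟩
  · rintro rfl
    obtain ⟨p, hp⟩ := hint
    exact lt_irrefl _ (hl p hp)
  · have hcl : closure (interior P) ⊆ {w | l w ≤ l y} :=
      closure_minimal (fun w hw => (hl w hw).le) (isClosed_le l.continuous continuous_const)
    rw [hconv.closure_interior_eq_closure_of_nonempty_interior hint] at hcl
    exact hcl (subset_closure hz)

lemma exists_mem_openSegment_notMem_interior {P : Set E} (hclosed : IsClosed P) {p x : E}
    (hp : p ∈ interior P) (hx : x ∉ P) : ∃ y ∈ openSegment ℝ p x, y ∈ P ∧ y ∉ interior P := by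
  by_contra! hcon
  have hcover : segment ℝ p x ⊆ interior P ∪ Pᶜ := by
    rw [← insert_endpoints_openSegment]
    rintro z (rfl | rfl | hz)
    · exact .inl hp
    · exact .inr hx
    · by_cases hzP : z ∈ P
      · exact .inl (hcon z hz hzP)
      · exact .inr hzP
  obtain ⟨z, -, hzi, hzP⟩ := (convex_segment p x).isPreconnected _ _ isOpen_interior
    hclosed.isOpen_compl hcover ⟨p, left_mem_segment ℝ p x, hp⟩ ⟨x, right_mem_segment ℝ p x, hx⟩
  exact hzP (interior_subset hzi)

end ConvexSets

/-! ### Faces of a 3-polytope and normals of its facets -/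

lemma setDim_mono {A B : Set E3} (h : A ⊆ B) : setDim A ≤ setDim B :=
  Submodule.finrank_mono (vectorSpan_mono ℝ h)

lemma IsFaceOf.subset {P F : Set E3} (hF : IsFaceOf F P) : F ⊆ P := hF.2.2.2.subset

lemma IsFaceOf.inter {P F G : Set E3} (hF : IsFaceOf F P) (hG : IsFaceOf G P)
    (h : (F ∩ G).Nonempty) : IsFaceOf (F ∩ G) P :=
  ⟨h, hF.2.1.inter hG.2.1, hF.2.2.1.inter hG.2.2.1, hF.2.2.2.inter hG.2.2.2⟩

lemma IsFaceOf.iInter {ι : Sort*} [Nonempty ι] {P : Set E3} {F : ι → Set E3}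
    (hF : ∀ i, IsFaceOf (F i) P) (h : (⋂ i, F i).Nonempty) : IsFaceOf (⋂ i, F i) P :=
  ⟨h, isClosed_iInter fun i => (hF i).2.1, convex_iInter fun i => (hF i).2.2.1,
    isExtreme_iInter fun i => (hF i).2.2.2⟩

lemma IsFaceOf.exists_mem_intrinsicInterior {P F : Set E3} (hF : IsFaceOf F P) :
    ∃ x, x ∈ F ∧ x ∈ intrinsicInterior ℝ F :=
  let ⟨x, hx⟩ := hF.1.intrinsicInterior hF.2.2.1
  ⟨x, intrinsicInterior_subset hx, hx⟩

lemma IsFaceOf.eq_of_subset_of_setDim_eq {P F G : Set E3} (hF : IsFaceOf F P) (hG : IsFaceOf G P)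
    (hFG : F ⊆ G) (hd : setDim F = setDim G) : F = G := by
  obtain ⟨x, hxF, hx⟩ := hF.exists_mem_intrinsicInterior
  have hspan : affineSpan ℝ F = affineSpan ℝ G := by
    refine AffineSubspace.eq_of_direction_eq_of_nonempty_of_le ?_ ⟨x, subset_affineSpan ℝ F hxF⟩
      (affineSpan_mono ℝ hFG)
    rw [direction_affineSpan, direction_affineSpan]
    exact Submodule.eq_of_le_of_finrank_eq (vectorSpan_mono ℝ hFG) hd
  refine hFG.antisymm (subset_of_mem_intrinsicInterior_of_isExtreme hG.subset hF.2.2.2 ?_ hxF)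
  rw [mem_intrinsicInterior] at hx ⊢
  rw [← hspan]
  obtain ⟨z, hz, rfl⟩ := hx
  exact ⟨z, interior_mono (preimage_mono hFG) hz, rfl⟩

lemma IsFacetOf.subset {P F : Set E3} (hF : IsFacetOf F P) : F ⊆ P := hF.1.subset

lemma IsFacetOf.eq_of_subset {P F G : Set E3} (hF : IsFacetOf F P) (hG : IsFacetOf G P)
    (hFG : F ⊆ G) : F = G :=
  hF.1.eq_of_subset_of_setDim_eq hG.1 hFG (hF.2.trans hG.2.symm)

lemma isFaceOf_toExposed {P : Set E3} (hclosed : IsClosed P) (hconv : Convex ℝ P)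
    {l : E3 →L[ℝ] ℝ} {y : E3} (hy : y ∈ P) (hl : ∀ z ∈ P, l z ≤ l y) :
    IsFaceOf (l.toExposed P) P :=
  have hexp : IsExposed ℝ P (l.toExposed P) := ContinuousLinearMap.toExposed.isExposed
  ⟨⟨y, hy, hl⟩, hexp.isClosed hclosed, hexp.convex hconv, hexp.isExtreme⟩

lemma setDim_toExposed_le_two (P : Set E3) {l : E3 →L[ℝ] ℝ} (hl : l ≠ 0) :
    setDim (l.toExposed P) ≤ 2 := by
  have hle : vectorSpan ℝ (l.toExposed P) ≤ LinearMap.ker (l : E3 →ₗ[ℝ] ℝ) := by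
    rw [vectorSpan_def, Submodule.span_le]
    rintro _ ⟨z, hz, w, hw, rfl⟩
    simpa [sub_eq_zero] using le_antisymm (hw.2 z hz.1) (hz.2 w hw.1)
  have hker : LinearMap.ker (l : E3 →ₗ[ℝ] ℝ) ≠ ⊤ := by
    rw [Ne, LinearMap.ker_eq_top]
    exact_mod_cast hl
  have hlt : setDim (l.toExposed P) < Module.finrank ℝ E3 :=
    (Submodule.finrank_mono hle).trans_lt (Submodule.finrank_lt hker)
  rw [finrank_euclideanSpace_fin] at hlt
  exact Nat.le_of_lt_succ hlt

/-- A 3-polytope: a polytope in `ℝ³` of dimension three. -/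
structure IsPolytope3 (P : Set E3) : Prop where
  isPolytope : IsPolytope P
  setDim_eq : setDim P = 3

lemma IsSimplePolytope3.isPolytope3 {P : Set E3} (hP : IsSimplePolytope3 P) : IsPolytope3 P :=
  ⟨hP.1, hP.2.1⟩

/-- A linear functional whose maximum on `P` is attained exactly on the facet `F`; some arbitrary
functional if `F` is not a facet. -/
def facetNormal (P F : Set E3) : E3 →L[ℝ] ℝ :=
  Classical.epsilon fun l => F = l.toExposed P

namespace IsPolytope3

variable {P F : Set E3}

lemma isCompact (hP : IsPolytope3 P) : IsCompact P := by
  obtain ⟨V, rfl⟩ := hP.isPolytope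
  exact V.finite_toSet.isCompact_convexHull (𝕜 := ℝ)

lemma isClosed (hP : IsPolytope3 P) : IsClosed P := hP.isCompact.isClosed

lemma convex (hP : IsPolytope3 P) : Convex ℝ P := by
  obtain ⟨V, rfl⟩ := hP.isPolytope
  exact convex_convexHull ℝ _

lemma finite_setOf_isFaceOf (hP : IsPolytope3 P) : {F | IsFaceOf F P}.Finite := by
  obtain ⟨V, rfl⟩ := hP.isPolytope
  refine Finite.of_finite_image (f := fun F => (V : Set E3) ∩ F) ?_ ?_
  · refine V.finite_toSet.finite_subsets.subset ?_
    rintro _ ⟨F, -, rfl⟩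
    exact inter_subset_left
  · intro F hF G hG hFG
    rw [eq_convexHull_inter_of_isExtreme hF.2.2.1 hF.2.2.2,
      eq_convexHull_inter_of_isExtreme hG.2.2.1 hG.2.2.2]
    exact congrArg (convexHull ℝ) hFG

lemma finite_setOf_isFacetOf (hP : IsPolytope3 P) : {F | IsFacetOf F P}.Finite :=
  hP.finite_setOf_isFaceOf.subset fun _ hF => hF.1

lemma nonempty_interior (hP : IsPolytope3 P) : (interior P).Nonempty := by
  have hspan : vectorSpan ℝ P = ⊤ := by
    refine Submodule.eq_top_of_finrank_eq ?_
    rw [finrank_euclideanSpace_fin]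
    exact hP.setDim_eq
  have hne : P.Nonempty := by
    by_contra h0
    rw [not_nonempty_iff_eq_empty.1 h0, vectorSpan_empty] at hspan
    exact bot_ne_top hspan
  rw [hP.convex.interior_nonempty_iff_affineSpan_eq_top]
  exact (AffineSubspace.affineSpan_eq_top_iff_vectorSpan_eq_top_of_nonempty ℝ E3 E3 hne).2 hspan

lemma notMem_interior (hP : IsPolytope3 P) (hF : IsFacetOf F P) {y : E3} (hy : y ∈ F) :
    y ∉ interior P := fun hyi => by
  have hPF : P ⊆ F := subset_of_mem_intrinsicInterior_of_isExtreme Subset.rfl hF.1.2.2.2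
    (interior_subset_intrinsicInterior hyi) hy
  have := setDim_mono hPF
  rw [hP.setDim_eq, hF.2] at this
  omega

lemma exists_supporting_face (hP : IsPolytope3 P) {y : E3} (hy : y ∈ P) (hyi : y ∉ interior P) :
    ∃ l : E3 →L[ℝ] ℝ, IsFaceOf (l.toExposed P) P ∧ y ∈ l.toExposed P ∧
      setDim (l.toExposed P) ≤ 2 := by
  obtain ⟨l, hl0, hl⟩ :=
    exists_supporting_functional_of_notMem_interior hP.convex hP.nonempty_interior hyi
  exact ⟨l, isFaceOf_toExposed hP.isClosed hP.convex hy hl, ⟨hy, hl⟩, setDim_toExposed_le_two P hl0⟩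

lemma eq_toExposed_facetNormal (hP : IsPolytope3 P) (hF : IsFacetOf F P) :
    F = (facetNormal P F).toExposed P := by
  refine Classical.epsilon_spec (p := fun l : E3 →L[ℝ] ℝ => F = l.toExposed P) ?_
  obtain ⟨x, hxF, hx⟩ := hF.1.exists_mem_intrinsicInterior
  obtain ⟨l, hface, hxl, hdim⟩ :=
    hP.exists_supporting_face (hF.subset hxF) (hP.notMem_interior hF hxF)
  have hFl : F ⊆ l.toExposed P :=
    subset_of_mem_intrinsicInterior_of_isExtreme hF.subset hface.2.2.2 hx hxl
  exact ⟨l, hF.1.eq_of_subset_of_setDim_eq hface hFl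
    (le_antisymm (setDim_mono hFl) (hdim.trans hF.2.ge))⟩

lemma facetNormal_le (hP : IsPolytope3 P) (hF : IsFacetOf F P) {x y : E3} (hx : x ∈ F)
    (hy : y ∈ P) : facetNormal P F y ≤ facetNormal P F x := by
  rw [hP.eq_toExposed_facetNormal hF] at hx
  exact hx.2 y hy

lemma facetNormal_eq_iff (hP : IsPolytope3 P) (hF : IsFacetOf F P) {x y : E3} (hx : x ∈ F)
    (hy : y ∈ P) : facetNormal P F y = facetNormal P F x ↔ y ∈ F := by
  refine ⟨fun hyx => ?_, fun hyF => ?_⟩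
  · rw [hP.eq_toExposed_facetNormal hF]
    exact ⟨hy, fun z hz => (hP.facetNormal_le hF hx hz).trans hyx.ge⟩
  · exact le_antisymm (hP.facetNormal_le hF hx hy) (hP.facetNormal_le hF hyF (hF.subset hx))

lemma facetNormal_lt (hP : IsPolytope3 P) (hF : IsFacetOf F P) {x y : E3} (hx : x ∈ F)
    (hy : y ∈ P) (hyF : y ∉ F) : facetNormal P F y < facetNormal P F x :=
  (hP.facetNormal_le hF hx hy).lt_of_ne fun h => hyF ((hP.facetNormal_eq_iff hF hx hy).1 h)

lemma exists_mem_interior_notMem_affineSpan_insert (hP : IsPolytope3 P) (x : E3) :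
    ∃ p ∈ interior P, ∀ A, IsFaceOf A P → setDim A ≤ 1 → p ∉ affineSpan ℝ (insert x A) := by
  have hfin : {A | IsFaceOf A P ∧ setDim A ≤ 1}.Finite :=
    hP.finite_setOf_isFaceOf.subset fun _ hA => hA.1
  obtain ⟨p, hp, hgen⟩ := exists_mem_forall_notMem_affineSubspace isOpen_interior
    hP.nonempty_interior (hfin.image fun A => affineSpan ℝ (insert x A)).countable (by
      rintro _ ⟨A, ⟨-, hA : Module.finrank ℝ (vectorSpan ℝ A) ≤ 1⟩, rfl⟩ htop
      have hdim := finrank_vectorSpan_insert_le_set ℝ A x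
      rw [← direction_affineSpan, show affineSpan ℝ (insert x A) = ⊤ from htop,
        AffineSubspace.direction_top, finrank_top, finrank_euclideanSpace_fin] at hdim
      omega)
  exact ⟨p, hp, fun A hA hdim => hgen _ ⟨A, ⟨hA, hdim⟩, rfl⟩⟩

/-- Seen from `x`, a generic interior point `p` is hidden behind no vertex or edge, so the segment
from `p` to `x` leaves `P` through the relative interior of a facet. -/
lemma exists_facet_separating (hP : IsPolytope3 P) {x : E3} (hx : x ∉ P) :
    ∃ F, IsFacetOf F P ∧ ∀ y ∈ F, facetNormal P F y < facetNormal P F x := by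
  obtain ⟨p, hpi, hgen⟩ := hP.exists_mem_interior_notMem_affineSpan_insert x
  obtain ⟨y, hypx, hyP, hyi⟩ := exists_mem_openSegment_notMem_interior hP.isClosed hpi hx
  obtain ⟨l, hface, hyF, hdim⟩ := hP.exists_supporting_face hyP hyi
  obtain ⟨a, b, ha, hb, hab, rfl⟩ := hypx
  set F := l.toExposed P
  set y := a • p + b • x
  have hp_line : p = AffineMap.lineMap x y a⁻¹ := by
    rw [AffineMap.lineMap_apply_module]
    match_scalars <;> field_simp
    linarith
  have hF : IsFacetOf F P := by
    refine ⟨hface, hdim.antisymm (Nat.succ_le_of_lt (not_le.1 fun hle => ?_))⟩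
    refine hgen F hface hle ?_
    rw [hp_line]
    exact AffineMap.lineMap_mem _ (subset_affineSpan ℝ _ (mem_insert x F))
      (subset_affineSpan ℝ _ (mem_insert_of_mem x hyF))
  have hpy : facetNormal P F p < facetNormal P F y :=
    hP.facetNormal_lt hF hyF (interior_subset hpi) fun hpF => hP.notMem_interior hF hpF hpi
  refine ⟨F, hF, fun z hz => (hP.facetNormal_le hF hyF (hF.subset hz)).trans_lt ?_⟩
  have hy_eq : facetNormal P F y = a * facetNormal P F p + b * facetNormal P F x := by
    simp [y]
  obtain rfl : a = 1 - b := by linarith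
  nlinarith

lemma eventually_add_smul_mem (hP : IsPolytope3 P) {y d : E3} (hy : y ∈ P)
    (hd : ∀ F, IsFacetOf F P → y ∈ F → facetNormal P F d ≤ 0) :
    ∀ᶠ t in nhdsWithin (0 : ℝ) (Ioi 0), y + t • d ∈ P := by
  have hfacet : ∀ F ∈ {F | IsFacetOf F P}, ∀ᶠ t in nhdsWithin (0 : ℝ) (Ioi 0),
      ∃ z ∈ F, facetNormal P F (y + t • d) ≤ facetNormal P F z := by
    intro F hF
    by_cases hyF : y ∈ F
    · filter_upwards [self_mem_nhdsWithin] with t ht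
      refine ⟨y, hyF, ?_⟩
      rw [map_add, map_smul, smul_eq_mul]
      linarith [mul_nonpos_of_nonneg_of_nonpos (mem_Ioi.1 ht).le (hd F hF hyF)]
    · obtain ⟨z, hz⟩ := hF.1.1
      have hcont : Continuous fun t : ℝ => facetNormal P F (y + t • d) := by fun_prop
      have hlt : facetNormal P F (y + (0 : ℝ) • d) < facetNormal P F z := by
        simpa using hP.facetNormal_lt hF hz hy hyF
      filter_upwards [nhdsWithin_le_nhds (hcont.continuousAt.eventually_lt_const hlt)] with t ht
      exact ⟨z, hz, ht.le⟩
  filter_upwards [(Filter.eventually_all_finite hP.finite_setOf_isFacetOf).2 hfacet] with t ht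
  by_contra hout
  obtain ⟨F, hF, hsep⟩ := hP.exists_facet_separating hout
  obtain ⟨z, hz, hle⟩ := ht F hF
  exact (hsep z hz).not_ge hle

lemma mem_vectorSpan_of_facetNormal_eq_zero (hP : IsPolytope3 P) {A : Set E3} (hA : IsFaceOf A P)
    {y d : E3} (hy : y ∈ A) (hd : ∀ F, IsFacetOf F P → y ∈ F → facetNormal P F d = 0) :
    d ∈ vectorSpan ℝ A := by
  have hyP := hA.subset hy
  have hpos := hP.eventually_add_smul_mem hyP fun F hF hyF => (hd F hF hyF).le
  have hneg := hP.eventually_add_smul_mem (d := -d) hyP fun F hF hyF => by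
    rw [map_neg, hd F hF hyF, neg_zero]
  obtain ⟨t, ⟨ht₁, ht₂⟩, ht0 : 0 < t⟩ := ((hpos.and hneg).and self_mem_nhdsWithin).exists
  have hmid : y ∈ openSegment ℝ (y + t • d) (y + t • -d) :=
    ⟨1 / 2, 1 / 2, by norm_num, by norm_num, by norm_num, by module⟩
  have hmem := vsub_mem_vectorSpan ℝ (hA.2.2.2.left_mem_of_mem_openSegment ht₁ ht₂ hy hmid) hy
  rw [vsub_eq_sub, add_sub_cancel_left] at hmem
  exact ((vectorSpan ℝ A).smul_mem_iff ht0.ne').1 hmem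

lemma mem_frontier_iff (hP : IsPolytope3 P) {y : E3} :
    y ∈ frontier P ↔ ∃ F, IsFacetOf F P ∧ y ∈ F := by
  rw [hP.isClosed.frontier_eq]
  refine ⟨fun ⟨hyP, hyi⟩ => ?_, fun ⟨F, hF, hyF⟩ => ⟨hF.subset hyF, hP.notMem_interior hF hyF⟩⟩
  by_contra! hno
  obtain ⟨p, hp⟩ := hP.nonempty_interior
  have hev := hP.eventually_add_smul_mem (d := y - p) hyP fun F hF hyF => absurd hyF (hno F hF)
  obtain ⟨t, ht, ht0 : 0 < t⟩ := (hev.and self_mem_nhdsWithin).exists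
  refine hyi (hP.convex.openSegment_interior_self_subset_interior hp ht ?_)
  refine ⟨t / (1 + t), 1 / (1 + t), by positivity, by positivity, by field_simp; ring, ?_⟩
  match_scalars <;> field_simp
  ring

end IsPolytope3

/-! ### Vertices and edges of a simple 3-polytope -/

lemma finThree_add_one_ne (j : Fin 3) : j + 1 ≠ j := by revert j; decide

lemma finThree_add_two_ne (j : Fin 3) : j + 2 ≠ j := by revert j; decide

lemma finThree_add_one_ne_add_two (j : Fin 3) : j + 1 ≠ j + 2 := by revert j; decide

lemma finThree_cases (i j : Fin 3) : i = j ∨ i = j + 1 ∨ i = j + 2 := by revert i j; decide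

lemma isVertexOf_iff {P : Set E3} {v : E3} : IsVertexOf v P ↔ v ∈ P.extremePoints ℝ :=
  ⟨fun hv => hv.2.2.2.mem_extremePoints, fun hv =>
    ⟨singleton_nonempty v, isClosed_singleton, convex_singleton v, isExtreme_singleton.2 hv⟩⟩

lemma IsVertexOf.mem {P : Set E3} {v : E3} (hv : IsVertexOf v P) : v ∈ P :=
  hv.subset rfl

lemma IsFaceOf.mem_extremePoints_iff {P F : Set E3} (hF : IsFaceOf F P) {v : E3} :
    v ∈ F.extremePoints ℝ ↔ v ∈ F ∧ IsVertexOf v P := by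
  rw [hF.2.2.2.extremePoints_eq, isVertexOf_iff]
  rfl

lemma IsEdgeOf.eq_of_subset {P e e' : Set E3} (he : IsEdgeOf e P) (he' : IsEdgeOf e' P)
    (h : e ⊆ e') : e = e' :=
  he.1.eq_of_subset_of_setDim_eq he'.1 h (he.2.trans he'.2.symm)

lemma ne_of_isEdgeOf_segment {P : Set E3} {a b : E3} (h : IsEdgeOf (segment ℝ a b) P) : a ≠ b := by
  rintro rfl
  have hdim := h.2
  rw [segment_same, setDim, vectorSpan_singleton, finrank_bot] at hdim
  exact zero_ne_one hdim

/-- The graph of `P`: two points are adjacent if they span an edge of `P`. -/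
def edgeGraph (P : Set E3) : SimpleGraph E3 where
  Adj a b := IsEdgeOf (segment ℝ a b) P
  symm := ⟨fun a b h => by rwa [segment_symm]⟩
  loopless := ⟨fun _ h => ne_of_isEdgeOf_segment h rfl⟩

lemma isVertexOf_of_edgeGraph_adj {P : Set E3} {a b : E3} (h : (edgeGraph P).Adj a b) :
    IsVertexOf a P :=
  (IsFaceOf.mem_extremePoints_iff (And.left h)).1 (left_mem_extremePoints_segment a b) |>.2

namespace IsPolytope3

variable {P F e : Set E3} {v : E3}

lemma isCompact_of_isFaceOf (hP : IsPolytope3 P) (hF : IsFaceOf F P) : IsCompact F :=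
  hP.isCompact.of_isClosed_subset hF.2.1 hF.subset

lemma exists_isVertexOf_mem (hP : IsPolytope3 P) (hF : IsFaceOf F P) : ∃ v ∈ F, IsVertexOf v P :=
  let ⟨v, hv⟩ := (hP.isCompact_of_isFaceOf hF).extremePoints_nonempty hF.1
  ⟨v, hF.mem_extremePoints_iff.1 hv⟩

lemma exists_eq_segment (hP : IsPolytope3 P) (he : IsEdgeOf e P) (hv : IsVertexOf v P)
    (hve : v ∈ e) : ∃ w, e = segment ℝ v w := by
  obtain ⟨a, b, -, rfl⟩ := exists_eq_segment_of_finrank_vectorSpan_eq_one he.1.2.2.1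
    (hP.isCompact_of_isFaceOf he.1) he.2
  have hvab := he.1.mem_extremePoints_iff.2 ⟨hve, hv⟩
  rw [extremePoints_segment] at hvab
  rcases hvab with hva | hvb
  · exact ⟨b, hva ▸ rfl⟩
  · exact ⟨a, hvb ▸ segment_symm ℝ a b⟩

end IsPolytope3

/-- `F 0`, `F 1`, `F 2` are the three facets of `P` meeting at its vertex `v`. -/
structure IsCornerAt (P : Set E3) (v : E3) (F : Fin 3 → Set E3) : Prop where
  isVertexOf : IsVertexOf v P
  injective : Function.Injective F
  range_eq : range F = {K | IsFacetOf K P ∧ v ∈ K}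

lemma IsSimplePolytope3.exists_isCornerAt {P : Set E3} (hP : IsSimplePolytope3 P) {v : E3}
    (hv : IsVertexOf v P) : ∃ F, IsCornerAt P v F := by
  have hcard : Nat.card {K | IsFacetOf K P ∧ v ∈ K} = 3 := hP.2.2 v hv
  have : Finite {K | IsFacetOf K P ∧ v ∈ K} := Nat.finite_of_card_ne_zero (by omega)
  let enum := (Finite.equivFinOfCardEq hcard).symm
  exact ⟨fun i => enum i, hv, Subtype.val_injective.comp enum.injective, by
    rw [range_comp', enum.range_eq_univ, image_univ, Subtype.range_coe]⟩

namespace IsCornerAt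

variable {P : Set E3} {v : E3} {F : Fin 3 → Set E3}

lemma isFacetOf (hF : IsCornerAt P v F) (i : Fin 3) : IsFacetOf (F i) P :=
  (hF.range_eq.subset (mem_range_self i)).1

lemma mem (hF : IsCornerAt P v F) (i : Fin 3) : v ∈ F i :=
  (hF.range_eq.subset (mem_range_self i)).2

lemma exists_eq (hF : IsCornerAt P v F) {K : Set E3} (hK : IsFacetOf K P) (hv : v ∈ K) :
    ∃ i, F i = K :=
  hF.range_eq.superset ⟨hK, hv⟩

lemma mem_vertex (hF : IsCornerAt P v F) : v ∈ P := hF.isVertexOf.mem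

lemma eq_zero_of_facetNormal_eq_zero (hP : IsPolytope3 P) (hF : IsCornerAt P v F) {d : E3}
    (hd : ∀ i, facetNormal P (F i) d = 0) : d = 0 := by
  have hmem : d ∈ vectorSpan ℝ {v} :=
    hP.mem_vectorSpan_of_facetNormal_eq_zero hF.isVertexOf rfl fun K hK hvK => by
      obtain ⟨i, rfl⟩ := hF.exists_eq hK hvK
      exact hd i
  rwa [vectorSpan_singleton, Submodule.mem_bot] at hmem

lemma facetNormal_sub_eq_zero_iff (hP : IsPolytope3 P) (hF : IsCornerAt P v F) {y : E3} (hy : y ∈ P)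
    (i : Fin 3) : facetNormal P (F i) (y - v) = 0 ↔ y ∈ F i := by
  rw [map_sub, sub_eq_zero, hP.facetNormal_eq_iff (hF.isFacetOf i) (hF.mem i) hy]

lemma facetNormal_sub_nonpos (hP : IsPolytope3 P) (hF : IsCornerAt P v F) {y : E3} (hy : y ∈ P)
    (i : Fin 3) : facetNormal P (F i) (y - v) ≤ 0 := by
  rw [map_sub, sub_nonpos]
  exact hP.facetNormal_le (hF.isFacetOf i) (hF.mem i) hy

lemma facetNormal_sub_eq_zero (hP : IsPolytope3 P) (hF : IsCornerAt P v F) {i : Fin 3} {x y : E3}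
    (hx : x ∈ F i) (hy : y ∈ F i) : facetNormal P (F i) (x - y) = 0 := by
  rw [map_sub, sub_eq_zero]
  exact (hP.facetNormal_eq_iff (hF.isFacetOf i) hy ((hF.isFacetOf i).subset hx)).2 hx

lemma eq_of_forall_mem (hP : IsPolytope3 P) (hF : IsCornerAt P v F) {y : E3} (hy : ∀ i, y ∈ F i) :
    y = v :=
  sub_eq_zero.1 <| hF.eq_zero_of_facetNormal_eq_zero hP fun i =>
    (hF.facetNormal_sub_eq_zero_iff hP ((hF.isFacetOf 0).subset (hy 0)) i).2 (hy i)

lemma iInter_eq (hP : IsPolytope3 P) (hF : IsCornerAt P v F) : ⋂ i, F i = {v} :=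
  eq_singleton_iff_unique_mem.2 ⟨mem_iInter.2 hF.mem, fun _ hy =>
    hF.eq_of_forall_mem hP (mem_iInter.1 hy)⟩

/-- The normals of the three facets at a corner form a basis, and `u j` is minus its dual basis. -/
lemma exists_edge_directions (hP : IsPolytope3 P) (hF : IsCornerAt P v F) :
    ∃ u : Fin 3 → E3, ∀ i j, facetNormal P (F i) (u j) = if i = j then -1 else 0 := by
  let N : E3 →ₗ[ℝ] Fin 3 → ℝ := LinearMap.pi fun i => (facetNormal P (F i) : E3 →ₗ[ℝ] ℝ)
  have hinj : Function.Injective N := by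
    rw [← LinearMap.ker_eq_bot, LinearMap.ker_eq_bot']
    exact fun d hd => hF.eq_zero_of_facetNormal_eq_zero hP (congrFun hd)
  have hsurj : Function.Surjective N :=
    (LinearMap.injective_iff_surjective_of_finrank_eq_finrank (by simp)).1 hinj
  choose u hu using fun j : Fin 3 => hsurj (Pi.single j (-1))
  refine ⟨u, fun i j => ?_⟩
  rw [← Pi.single_apply, ← hu j]
  rfl

lemma exists_pos_add_smul_mem_inter (hP : IsPolytope3 P) (hF : IsCornerAt P v F) {u : E3}
    (hu : ∀ i, facetNormal P (F i) u ≤ 0) :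
    ∃ t : ℝ, 0 < t ∧ ∀ i, facetNormal P (F i) u = 0 → v + t • u ∈ F i := by
  have hev := hP.eventually_add_smul_mem hF.mem_vertex fun K hK hvK => by
    obtain ⟨i, rfl⟩ := hF.exists_eq hK hvK
    exact hu i
  obtain ⟨t, ht, ht0 : 0 < t⟩ := (hev.and self_mem_nhdsWithin).exists
  refine ⟨t, ht0, fun i hi => (hF.facetNormal_sub_eq_zero_iff hP ht i).1 ?_⟩
  rw [add_sub_cancel_left, map_smul, hi, smul_zero]

lemma vectorSpan_inter (hP : IsPolytope3 P) (hF : IsCornerAt P v F) {u : Fin 3 → E3}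
    (hu : ∀ i j, facetNormal P (F i) (u j) = if i = j then -1 else 0) (j : Fin 3) :
    vectorSpan ℝ (F (j + 1) ∩ F (j + 2)) = ℝ ∙ u j := by
  have hj1 := finThree_add_one_ne j
  have hj2 := finThree_add_two_ne j
  refine le_antisymm ?_ ((Submodule.span_singleton_le_iff_mem _ _).2 ?_)
  · rw [vectorSpan_def, Submodule.span_le]
    rintro _ ⟨x, hx, y, hy, rfl⟩
    refine Submodule.mem_span_singleton.2 ⟨-facetNormal P (F j) (x - y), sub_eq_zero.1 ?_⟩
    refine hF.eq_zero_of_facetNormal_eq_zero hP fun i => ?_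
    change facetNormal P (F i) (-facetNormal P (F j) (x - y) • u j - (x - y)) = 0
    rw [map_sub, map_smul, hu]
    rcases finThree_cases i j with rfl | rfl | rfl
    · simp
    · simp [hj1, hF.facetNormal_sub_eq_zero hP hx.1 hy.1]
    · simp [hj2, hF.facetNormal_sub_eq_zero hP hx.2 hy.2]
  · obtain ⟨t, ht0, ht⟩ := hF.exists_pos_add_smul_mem_inter hP (u := u j) fun i => by
      rw [hu]; split_ifs <;> norm_num
    have hmem : v + t • u j ∈ F (j + 1) ∩ F (j + 2) :=
      ⟨ht _ (by rw [hu, if_neg hj1]), ht _ (by rw [hu, if_neg hj2])⟩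
    have hspan := vsub_mem_vectorSpan ℝ hmem ⟨hF.mem _, hF.mem _⟩
    rw [vsub_eq_sub, add_sub_cancel_left] at hspan
    exact (Submodule.smul_mem_iff _ ht0.ne').1 hspan

lemma isEdgeOf_inter_succ (hP : IsPolytope3 P) (hF : IsCornerAt P v F) (j : Fin 3) :
    IsEdgeOf (F (j + 1) ∩ F (j + 2)) P := by
  obtain ⟨u, hu⟩ := hF.exists_edge_directions hP
  have hu0 : u j ≠ 0 := fun h => by simpa [h] using hu j j
  refine ⟨(hF.isFacetOf _).1.inter (hF.isFacetOf _).1 ⟨v, hF.mem _, hF.mem _⟩, ?_⟩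
  rw [setDim, hF.vectorSpan_inter hP hu, finrank_span_singleton hu0]

lemma isEdgeOf_inter (hP : IsPolytope3 P) (hF : IsCornerAt P v F) {i j : Fin 3} (hij : i ≠ j) :
    IsEdgeOf (F i ∩ F j) P := by
  have hk : ∃ k : Fin 3, i = k + 1 ∧ j = k + 2 ∨ i = k + 2 ∧ j = k + 1 := by
    revert i j; decide
  obtain ⟨k, ⟨rfl, rfl⟩ | ⟨rfl, rfl⟩⟩ := hk
  · exact hF.isEdgeOf_inter_succ hP k
  · rw [inter_comm]
    exact hF.isEdgeOf_inter_succ hP k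

/-- A relatively interior point of an edge at `v` lies in two of the three facets at `v`: otherwise
two independent directions would be killed by the normals of all facets through that point. -/
lemma exists_eq_inter_of_isEdgeOf (hP : IsPolytope3 P) (hF : IsCornerAt P v F) {e : Set E3}
    (he : IsEdgeOf e P) (hve : v ∈ e) : ∃ j, e = F (j + 1) ∩ F (j + 2) := by
  obtain ⟨u, hu⟩ := hF.exists_edge_directions hP
  obtain ⟨y, hye, hy⟩ := he.1.exists_mem_intrinsicInterior
  have hsub : ∀ K, IsFacetOf K P → y ∈ K → e ⊆ K := fun K hK hyK =>
    subset_of_mem_intrinsicInterior_of_isExtreme he.1.subset hK.1.2.2.2 hy hyK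
  have hspan : ∀ j, y ∉ F j → u j ∈ vectorSpan ℝ e := fun j hj =>
    hP.mem_vectorSpan_of_facetNormal_eq_zero he.1 hye fun K hK hyK => by
      obtain ⟨i, rfl⟩ := hF.exists_eq hK (hsub K hK hyK hve)
      rw [hu, if_neg (by rintro rfl; exact hj hyK)]
  have hone : ∀ j k, y ∉ F j → y ∉ F k → j = k := fun j k hj hk => by
    by_contra hjk
    have hne : (⟨u j, hspan j hj⟩ : vectorSpan ℝ e) ≠ 0 := fun h => by
      have huj : u j = 0 := congrArg Subtype.val h
      simpa [huj] using hu j j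
    obtain ⟨c, hc⟩ := (finrank_eq_one_iff_of_nonzero' _ hne).1 he.2 ⟨u k, hspan k hk⟩
    have hck : c • u j = u k := congrArg Subtype.val hc
    have := hu k k
    rw [← hck, map_smul, hu, if_neg (Ne.symm hjk), if_pos rfl] at this
    norm_num at this
  have hj : ∃ j, y ∈ F (j + 1) ∧ y ∈ F (j + 2) := by
    by_contra! hnot
    rcases em (y ∈ F 1) with h1 | h1
    · have h2 := hnot 0 h1
      exact absurd (hone 2 0 h2 fun h0 => hnot 2 h0 h1) (by decide)
    · have h2 : y ∈ F 2 := by_contra fun h2 => absurd (hone 1 2 h1 h2) (by decide)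
      exact absurd (hone 1 0 h1 (hnot 1 h2)) (by decide)
  obtain ⟨j, h₁, h₂⟩ := hj
  exact ⟨j, he.eq_of_subset (hF.isEdgeOf_inter_succ hP j)
    (subset_inter (hsub _ (hF.isFacetOf _) h₁) (hsub _ (hF.isFacetOf _) h₂))⟩

end IsCornerAt

/-- The star of a vertex `v`: its three facets `F j` and its three neighbours `b j`, labelled so
that the edge from `v` to `b j` is the one opposite to `F j`, i.e. the one in the other two. -/
structure IsStarAt (P : Set E3) (v : E3) (F : Fin 3 → Set E3) (b : Fin 3 → E3) : Prop
    extends IsCornerAt P v F where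
  inter_eq_segment : ∀ j, F (j + 1) ∩ F (j + 2) = segment ℝ v (b j)

lemma IsCornerAt.exists_isStarAt {P : Set E3} (hP : IsPolytope3 P) {v : E3} {F : Fin 3 → Set E3}
    (hF : IsCornerAt P v F) : ∃ b, IsStarAt P v F b := by
  choose b hb using fun j => hP.exists_eq_segment (hF.isEdgeOf_inter_succ hP j) hF.isVertexOf
    ⟨hF.mem _, hF.mem _⟩
  exact ⟨b, hF, hb⟩

namespace IsStarAt

variable {P : Set E3} {v : E3} {F : Fin 3 → Set E3} {b : Fin 3 → E3}

lemma edgeGraph_adj_iff (hP : IsPolytope3 P) (hF : IsStarAt P v F b) {w : E3} :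
    (edgeGraph P).Adj v w ↔ ∃ j, b j = w := by
  constructor
  · intro hw
    obtain ⟨j, hj⟩ := hF.exists_eq_inter_of_isEdgeOf hP hw (left_mem_segment ℝ v w)
    exact ⟨j, segment_eq_segment_left_iff.1 ((hF.inter_eq_segment j).symm.trans hj.symm)⟩
  · rintro ⟨j, rfl⟩
    exact (hF.inter_eq_segment j ▸ hF.isEdgeOf_inter_succ hP j : IsEdgeOf (segment ℝ v (b j)) P)

lemma neighbour_mem_iff (hP : IsPolytope3 P) (hF : IsStarAt P v F b) {i j : Fin 3} :
    b j ∈ F i ↔ i ≠ j := by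
  have hbj : b j ∈ F (j + 1) ∩ F (j + 2) :=
    (hF.inter_eq_segment j).superset (right_mem_segment ℝ _ _)
  have hmem : i ≠ j → b j ∈ F i := fun hij => by
    rcases finThree_cases i j with rfl | rfl | rfl
    exacts [absurd rfl hij, hbj.1, hbj.2]
  refine ⟨?_, hmem⟩
  rintro hbi rfl
  have hadj := (hF.edgeGraph_adj_iff hP).2 ⟨i, rfl⟩
  refine hadj.ne (hF.eq_of_forall_mem hP fun k => ?_).symm
  rcases finThree_cases k i with rfl | rfl | rfl
  exacts [hbi, hbj.1, hbj.2]

lemma neighbour_injective (hP : IsPolytope3 P) (hF : IsStarAt P v F b) : Function.Injective b :=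
  fun _ _ hij => by_contra fun hne =>
    (hF.neighbour_mem_iff hP).1 (hij ▸ (hF.neighbour_mem_iff hP).2 hne) rfl

/-- The tangent cone of `P` at a vertex is generated by the three edges at the vertex. -/
lemma exists_sub_eq_sum (hP : IsPolytope3 P) (hF : IsStarAt P v F b) {y : E3} (hy : y ∈ P) :
    ∃ t : Fin 3 → ℝ, (∀ j, 0 ≤ t j) ∧ (∀ j, y ∈ F j → t j = 0) ∧ y - v = ∑ j, t j • (b j - v) := by
  have hbP : ∀ j, b j ∈ P := fun j =>
    (hF.isFacetOf (j + 1)).subset ((hF.neighbour_mem_iff hP).2 (finThree_add_one_ne j))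
  have hb : ∀ i j, facetNormal P (F i) (b j - v) = 0 ↔ i ≠ j := fun i j =>
    (hF.facetNormal_sub_eq_zero_iff hP (hbP j) i).trans (hF.neighbour_mem_iff hP)
  let t j := facetNormal P (F j) (y - v) / facetNormal P (F j) (b j - v)
  refine ⟨t, fun j => div_nonneg_of_nonpos (hF.facetNormal_sub_nonpos hP hy j)
    (hF.facetNormal_sub_nonpos hP (hbP j) j), fun j hj => ?_, sub_eq_zero.1 ?_⟩
  · simp only [t, (hF.facetNormal_sub_eq_zero_iff hP hy j).2 hj, zero_div]
  · refine hF.eq_zero_of_facetNormal_eq_zero hP fun i => ?_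
    rw [map_sub, map_sum, Finset.sum_eq_single i (fun j _ hji => ?_) (by simp), map_smul,
      smul_eq_mul, div_mul_cancel₀ _ fun h => (hb i i).1 h rfl, sub_self]
    rw [map_smul, (hb i j).2 hji.symm, smul_zero]

/-- The step of the simplex method. -/
lemma apply_le_of_forall_adj (hP : IsPolytope3 P) (hF : IsStarAt P v F b) (l : E3 →L[ℝ] ℝ)
    {i : Fin 3} (hl : ∀ w ∈ F i, (edgeGraph P).Adj v w → l w ≤ l v) {y : E3} (hy : y ∈ F i) :
    l y ≤ l v := by
  obtain ⟨t, ht0, hti, ht⟩ := hF.exists_sub_eq_sum hP ((hF.isFacetOf i).subset hy)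
  rw [← sub_nonpos, ← map_sub, ht, map_sum]
  refine Finset.sum_nonpos fun j _ => ?_
  rw [map_smul, smul_eq_mul, map_sub]
  rcases eq_or_ne i j with rfl | hij
  · rw [hti i hy, zero_mul]
  · exact mul_nonpos_of_nonneg_of_nonpos (ht0 j) <| sub_nonpos.2 <|
      hl _ ((hF.neighbour_mem_iff hP).2 hij) ((hF.edgeGraph_adj_iff hP).2 ⟨j, rfl⟩)

end IsStarAt

/-! ### The boundary polygon of a facet -/

lemma exists_isCycle_of_ncard_neighborSet_eq_two {V : Type*} [Finite V] {G : SimpleGraph V}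
    (hconn : G.Preconnected) (hdeg : ∀ a, (G.neighborSet a).ncard = 2) {a b : V}
    (hab : G.Adj a b) :
    ∃ p : G.Walk a a, p.IsCycle ∧ p.getVert 1 = b ∧ {e | e ∈ p.edges} = G.edgeSet := by
  have hcyc : G.IsCycles := fun a _ => hdeg a
  obtain ⟨p, hp, hverts⟩ := hcyc.exists_cycle_toSubgraph_verts_eq_connectedComponentSupp
    (c := G.connectedComponentMk a) rfl ⟨b, hab⟩
  have hsupp : ∀ c, c ∈ p.support := fun c => by
    rw [← p.mem_verts_toSubgraph, hverts]
    exact SimpleGraph.ConnectedComponent.sound (hconn c a)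
  have hnbr : ∀ c, p.toSubgraph.neighborSet c = G.neighborSet c := fun c =>
    Set.eq_of_subset_of_ncard_le (p.toSubgraph.neighborSet_subset c)
      (by rw [hdeg, hp.ncard_neighborSet_toSubgraph_eq_two (hsupp c)])
  have hedges : {e | e ∈ p.edges} = G.edgeSet := by
    ext e
    rw [mem_ofPred_eq, ← p.mem_edges_toSubgraph]
    induction e with | _ c d => exact Set.ext_iff.1 (hnbr c) d
  have hb : b ∈ p.toSubgraph.neighborSet a := (hnbr a).superset hab
  rw [hp.neighborSet_toSubgraph_endpoint] at hb
  rcases hb with rfl | rfl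
  · exact ⟨p, hp, rfl, hedges⟩
  · refine ⟨p.reverse, hp.reverse, ?_, ?_⟩
    · simp [SimpleGraph.Walk.penultimate]
    · simp [hedges]

/-- The vertices and edges of `P` contained in `F`. -/
abbrev facetGraph (P F : Set E3) : SimpleGraph {w | w ∈ F ∧ IsVertexOf w P} :=
  (edgeGraph P).induce {w | w ∈ F ∧ IsVertexOf w P}

lemma IsPolytope3.finite_setOf_mem_isVertexOf {P : Set E3} (hP : IsPolytope3 P) (F : Set E3) :
    {w | w ∈ F ∧ IsVertexOf w P}.Finite :=
  (hP.finite_setOf_isFaceOf.preimage singleton_injective.injOn).subset fun _ hw => hw.2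

namespace IsStarAt

variable {P : Set E3} {v : E3} {F : Fin 3 → Set E3} {b : Fin 3 → E3}

lemma facetGraph_adj_iff (hP : IsPolytope3 P) (hF : IsStarAt P v F b) {i : Fin 3}
    {w : {w | w ∈ F i ∧ IsVertexOf w P}} :
    (facetGraph P (F i)).Adj ⟨v, hF.mem i, hF.isVertexOf⟩ w ↔ w = b (i + 1) ∨ w = b (i + 2) := by
  rw [SimpleGraph.induce_adj, hF.edgeGraph_adj_iff hP]
  constructor
  · rintro ⟨j, hj⟩
    have hij : i ≠ j := (hF.neighbour_mem_iff hP).1 (hj ▸ w.2.1)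
    rcases (finThree_cases j i).resolve_left hij.symm with rfl | rfl
    exacts [.inl hj.symm, .inr hj.symm]
  · rintro (h | h)
    exacts [⟨_, h.symm⟩, ⟨_, h.symm⟩]

lemma neighbour_mem_facetGraph (hP : IsPolytope3 P) (hF : IsStarAt P v F b) {i j : Fin 3}
    (hij : i ≠ j) : b j ∈ {w | w ∈ F i ∧ IsVertexOf w P} :=
  ⟨(hF.neighbour_mem_iff hP).2 hij,
    isVertexOf_of_edgeGraph_adj ((hF.edgeGraph_adj_iff hP).2 ⟨j, rfl⟩).symm⟩

lemma ncard_neighborSet_facetGraph (hP : IsPolytope3 P) (hF : IsStarAt P v F b) (i : Fin 3) :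
    ((facetGraph P (F i)).neighborSet ⟨v, hF.mem i, hF.isVertexOf⟩).ncard = 2 := by
  refine Set.ncard_eq_two.2
    ⟨⟨b (i + 1), hF.neighbour_mem_facetGraph hP (finThree_add_one_ne i).symm⟩,
      ⟨b (i + 2), hF.neighbour_mem_facetGraph hP (finThree_add_two_ne i).symm⟩, ?_, ?_⟩
  · exact fun h => finThree_add_one_ne_add_two i
      (hF.neighbour_injective hP (congrArg Subtype.val h))
  · ext w
    rw [SimpleGraph.mem_neighborSet, hF.facetGraph_adj_iff hP, mem_insert_iff, mem_singleton_iff,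
      Subtype.ext_iff, Subtype.ext_iff]

end IsStarAt

namespace IsSimplePolytope3

variable {P F : Set E3} {v : E3}

lemma exists_isStarAt (hP : IsSimplePolytope3 P) (hv : IsVertexOf v P) :
    ∃ F b, IsStarAt P v F b :=
  let ⟨F, hF⟩ := hP.exists_isCornerAt hv
  ⟨F, hF.exists_isStarAt hP.isPolytope3⟩

lemma ncard_neighborSet_facetGraph (hP : IsSimplePolytope3 P) (hF : IsFacetOf F P)
    (a : {w | w ∈ F ∧ IsVertexOf w P}) : ((facetGraph P F).neighborSet a).ncard = 2 := by
  obtain ⟨K, b, hK⟩ := hP.exists_isStarAt a.2.2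
  obtain ⟨i, rfl⟩ := hK.exists_eq hF a.2.1
  exact hK.ncard_neighborSet_facetGraph hP.isPolytope3 i

/-- A linear functional separating a vertex `w` from the component of `v` would attain its maximum
over that component at a vertex all of whose neighbours lie in the component, hence its maximum
over `F`. -/
lemma facetGraph_preconnected (hP : IsSimplePolytope3 P) (hF : IsFacetOf F P) :
    (facetGraph P F).Preconnected := by
  intro v w
  by_contra hvw
  let C : Set E3 := Subtype.val '' {c | (facetGraph P F).Reachable v c}
  have hCF : C ⊆ F := by rintro _ ⟨c, -, rfl⟩; exact c.2.1
  have hCfin : C.Finite := (hP.isPolytope3.finite_setOf_mem_isVertexOf F).subset <| by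
    rintro _ ⟨c, -, rfl⟩; exact c.2
  have hwC : (w : E3) ∉ convexHull ℝ C := fun hw => by
    have hext : (w : E3) ∈ (convexHull ℝ C).extremePoints ℝ :=
      inter_extremePoints_subset_extremePoints_of_subset
        (convexHull_min hCF hF.1.2.2.1) ⟨hw, hF.1.mem_extremePoints_iff.2 w.2⟩
    obtain ⟨c, hc, hcw⟩ := extremePoints_convexHull_subset hext
    exact hvw (Subtype.ext hcw ▸ hc)
  obtain ⟨l, a, hla, haw⟩ := geometric_hahn_banach_closed_point (convex_convexHull ℝ C)
    (hCfin.isCompact_convexHull ℝ).isClosed hwC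
  obtain ⟨_, ⟨c, hc, rfl⟩, hmax⟩ := hCfin.exists_maximalFor l C ⟨v, v, .rfl, rfl⟩
  obtain ⟨K, b, hK⟩ := hP.exists_isStarAt c.2.2
  obtain ⟨i, rfl⟩ := hK.exists_eq hF c.2.1
  have hle : l w ≤ l c := hK.apply_le_of_forall_adj hP.isPolytope3 l (fun y hy hadj => by
    have hy' : IsVertexOf y P := isVertexOf_of_edgeGraph_adj hadj.symm
    have hyC : y ∈ C :=
      ⟨⟨y, hy, hy'⟩, hc.trans (SimpleGraph.Adj.reachable (SimpleGraph.induce_adj.2 hadj)), rfl⟩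
    exact (le_total _ _).elim id (hmax hyC)) w.2.1
  exact (haw.trans_le hle).not_gt (hla c (subset_convexHull ℝ C ⟨c, hc, rfl⟩))

end IsSimplePolytope3

/-- The vertices of the facet `F` in cyclic order are `x 0, …, x (s - 1)`, and `x s = x 0`. -/
structure IsBoundaryPolygon (P F : Set E3) (s : ℕ) (x : ℕ → E3) : Prop where
  three_le : 3 ≤ s
  injOn : InjOn x (Iio s)
  closed : x s = x 0
  isEdgeOf : ∀ t < s, IsEdgeOf (segment ℝ (x t) (x (t + 1))) P
  subset : ∀ t < s, segment ℝ (x t) (x (t + 1)) ⊆ F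
  exists_eq : ∀ e, IsEdgeOf e P → e ⊆ F → ∃ t < s, e = segment ℝ (x t) (x (t + 1))
  facetEdges_eq : facetEdges P F = s

lemma IsPolytope3.image_edgeSet_facetGraph {P F : Set E3} (hP : IsPolytope3 P) (hF : IsFaceOf F P) :
    Sym2.lift ⟨fun a b => segment ℝ a.1 b.1, fun a b => segment_symm ℝ a.1 b.1⟩ ''
      (facetGraph P F).edgeSet = {e | IsEdgeOf e P ∧ e ⊆ F} := by
  ext e
  constructor
  · rintro ⟨z, hz, rfl⟩
    induction z with | _ a b => exact ⟨hz, hF.2.2.1.segment_subset a.2.1 b.2.1⟩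
  · rintro ⟨he, heF⟩
    obtain ⟨a, hae, ha⟩ := hP.exists_isVertexOf_mem he.1
    obtain ⟨b, rfl⟩ := hP.exists_eq_segment he ha hae
    have hb : IsVertexOf b P := isVertexOf_of_edgeGraph_adj (SimpleGraph.Adj.symm he)
    exact ⟨s(⟨a, heF hae, ha⟩, ⟨b, heF (right_mem_segment ℝ a b), hb⟩), he, rfl⟩

lemma IsPolytope3.facetEdges_eq_ncard_edgeSet {P F : Set E3} (hP : IsPolytope3 P)
    (hF : IsFaceOf F P) : facetEdges P F = (facetGraph P F).edgeSet.ncard := by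
  rw [facetEdges, ← hP.image_edgeSet_facetGraph hF, ncard_image_of_injective]
  intro z z' h
  induction z with | _ a b
  induction z' with | _ c d
  simpa [segment_eq_segment_iff, Subtype.ext_iff] using h

lemma IsPolytope3.isBoundaryPolygon_getVert {P F : Set E3} (hP : IsPolytope3 P) (hF : IsFaceOf F P)
    {a : {w | w ∈ F ∧ IsVertexOf w P}} {p : (facetGraph P F).Walk a a} (hp : p.IsCycle)
    (hedges : {e | e ∈ p.edges} = (facetGraph P F).edgeSet) :
    IsBoundaryPolygon P F p.length fun t => p.getVert t where
  three_le := hp.three_le_length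
  injOn t ht t' ht' h := hp.getVert_injOn' (Nat.le_sub_one_of_lt ht) (Nat.le_sub_one_of_lt ht')
    (Subtype.ext h)
  closed := by rw [p.getVert_length, p.getVert_zero]
  isEdgeOf t ht := p.adj_getVert_succ ht
  subset t _ := hF.2.2.1.segment_subset (p.getVert t).2.1 (p.getVert (t + 1)).2.1
  exists_eq e he heF := by
    obtain ⟨z, hz, rfl⟩ := (hP.image_edgeSet_facetGraph hF).superset ⟨he, heF⟩
    rw [← hedges] at hz
    induction z with | _ c d
    obtain ⟨t, ht, h⟩ := p.mk_mem_edges_iff_exists.1 hz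
    exact ⟨t, ht, by rw [← h]; rfl⟩
  facetEdges_eq := by
    classical
    have hfinset : {e | e ∈ p.edges} = (p.edges.toFinset : Set _) := by ext; simp
    rw [hP.facetEdges_eq_ncard_edgeSet hF, ← hedges, hfinset, ncard_coe_finset,
      List.toFinset_card_of_nodup hp.edges_nodup, p.length_edges]

lemma IsStarAt.exists_isBoundaryPolygon {P : Set E3} (hP : IsSimplePolytope3 P) {v : E3}
    {F : Fin 3 → Set E3} {b : Fin 3 → E3} (hF : IsStarAt P v F b) (i : Fin 3) :
    ∃ s x, IsBoundaryPolygon P (F i) s x ∧ x 0 = v ∧ x 1 = b (i + 1) ∧ x (s - 1) = b (i + 2) := by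
  have hP' := hP.isPolytope3
  have : Finite {w | w ∈ F i ∧ IsVertexOf w P} := hP'.finite_setOf_mem_isVertexOf (F i)
  obtain ⟨p, hp, hp1, hedges⟩ := exists_isCycle_of_ncard_neighborSet_eq_two
    (hP.facetGraph_preconnected (hF.isFacetOf i))
    (hP.ncard_neighborSet_facetGraph (hF.isFacetOf i))
    ((hF.facetGraph_adj_iff hP'
      (w := ⟨_, hF.neighbour_mem_facetGraph hP' (finThree_add_one_ne i).symm⟩)).2 (.inl rfl))
  refine ⟨p.length, _, hP'.isBoundaryPolygon_getVert (hF.isFacetOf i).1 hp hedges,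
    congrArg Subtype.val p.getVert_zero, congrArg Subtype.val hp1, ?_⟩
  have hlast := (hF.facetGraph_adj_iff hP').1 (p.adj_penultimate hp.not_nil).symm
  refine hlast.resolve_left fun h => ?_
  have hpen : p.getVert (p.length - 1) = p.getVert 1 := Subtype.ext (h.trans (hp1 ▸ rfl))
  have hlen := hp.three_le_length
  have := hp.getVert_injOn' (mem_ofPred.2 le_rfl) (mem_ofPred.2 (by omega)) hpen
  omega

namespace IsSimplePolytope3

variable {P F : Set E3}

lemma three_le_facetEdges (hP : IsSimplePolytope3 P) (hF : IsFacetOf F P) :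
    3 ≤ facetEdges P F := by
  obtain ⟨v, hvF, hv⟩ := hP.isPolytope3.exists_isVertexOf_mem hF.1
  obtain ⟨K, b, hK⟩ := hP.exists_isStarAt hv
  obtain ⟨i, rfl⟩ := hK.exists_eq hF hvF
  obtain ⟨s, x, hx, -⟩ := hK.exists_isBoundaryPolygon hP i
  exact hx.facetEdges_eq ▸ hx.three_le

lemma four_le_facetEdges (hP : IsSimplePolytope3 P) (h3 : pVec P 3 = 0) (hF : IsFacetOf F P) :
    4 ≤ facetEdges P F := by
  have hfin : {K | IsFacetOf K P ∧ facetEdges P K = 3}.Finite :=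
    hP.isPolytope3.finite_setOf_isFacetOf.subset fun _ hK => hK.1
  have hne : facetEdges P F ≠ 3 := fun h =>
    ((ncard_eq_zero hfin).1 h3).subset (show F ∈ _ from ⟨hF, h⟩)
  exact (hP.three_le_facetEdges hF).lt_of_ne' hne

end IsSimplePolytope3

/-! ### Incidence of facets and edges -/

namespace IsSimplePolytope3

variable {P A B e : Set E3}

lemma exists_other_facet (hP : IsSimplePolytope3 P) (he : IsEdgeOf e P) (hA : IsFacetOf A P)
    (heA : e ⊆ A) :
    ∃ B, IsFacetOf B P ∧ B ≠ A ∧ A ∩ B = e ∧ ∀ K, IsFacetOf K P → e ⊆ K → K = A ∨ K = B := by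
  obtain ⟨v, hve, hv⟩ := hP.isPolytope3.exists_isVertexOf_mem he.1
  obtain ⟨F, b, hF⟩ := hP.exists_isStarAt hv
  obtain ⟨j, rfl⟩ := hF.exists_eq_inter_of_isEdgeOf hP.isPolytope3 he hve
  have hbe : b j ∈ F (j + 1) ∩ F (j + 2) :=
    (hF.inter_eq_segment j).superset (right_mem_segment ℝ _ _)
  have hne : F (j + 1) ≠ F (j + 2) := hF.injective.ne (finThree_add_one_ne_add_two j)
  have hK : ∀ K, IsFacetOf K P → F (j + 1) ∩ F (j + 2) ⊆ K → K = F (j + 1) ∨ K = F (j + 2) := by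
    intro K hK hsub
    obtain ⟨k, rfl⟩ := hF.exists_eq hK (hsub hve)
    have hkj : k ≠ j := (hF.neighbour_mem_iff hP.isPolytope3).1 (hsub hbe)
    exact ((finThree_cases k j).resolve_left hkj).imp (congrArg F) (congrArg F)
  rcases hK A hA heA with rfl | rfl
  · exact ⟨_, hF.isFacetOf (j + 2), hne.symm, rfl, hK⟩
  · exact ⟨_, hF.isFacetOf (j + 1), hne, inter_comm _ _, fun K hKf h => (hK K hKf h).symm⟩

lemma isEdgeOf_inter (hP : IsSimplePolytope3 P) (hA : IsFacetOf A P) (hB : IsFacetOf B P)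
    (hAB : A ≠ B) (h : (A ∩ B).Nonempty) : IsEdgeOf (A ∩ B) P := by
  obtain ⟨v, ⟨hvA, hvB⟩, hv⟩ := hP.isPolytope3.exists_isVertexOf_mem (hA.1.inter hB.1 h)
  obtain ⟨F, hF⟩ := hP.exists_isCornerAt hv
  obtain ⟨i, rfl⟩ := hF.exists_eq hA hvA
  obtain ⟨j, rfl⟩ := hF.exists_eq hB hvB
  exact hF.isEdgeOf_inter hP.isPolytope3 fun hij => hAB (congrArg F hij)

end IsSimplePolytope3

/-! ### Cyclic words -/

lemma val_nxt_of_lt {n : ℕ} {j : Fin n} (h : j.1 + 1 < n) : (nxt j).1 = j.1 + 1 :=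
  Nat.mod_eq_of_lt h

lemma val_nxt_of_eq {n : ℕ} {j : Fin n} (h : j.1 + 1 = n) : (nxt j).1 = 0 := by
  simp [nxt, h]

lemma nxt_ne_self {n : ℕ} (hn : 2 ≤ n) (j : Fin n) : nxt j ≠ j := by
  intro h
  have hval := congrArg Fin.val h
  rcases (Nat.succ_le_iff.2 j.2).lt_or_eq with hj | hj
  · rw [val_nxt_of_lt hj] at hval
    omega
  · rw [val_nxt_of_eq hj] at hval
    omega

lemma val_iterate_nxt {n : ℕ} (t : ℕ) (i : Fin n) : (nxt^[t] i).1 = (i.1 + t) % n := by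
  induction t with
  | zero => exact (Nat.mod_eq_of_lt i.2).symm
  | succ t ih => simp only [Function.iterate_succ_apply', nxt, ih, Nat.mod_add_mod, add_assoc]

lemma nxt_nxt_ne_self {n : ℕ} (hn : 3 ≤ n) (j : Fin n) : nxt (nxt j) ≠ j := by
  intro h
  have hval : (j.1 + 2) % n = j.1 := by rw [← val_iterate_nxt, ← congrArg Fin.val h]; rfl
  rcases lt_or_ge (j.1 + 2) n with hj | hj
  · rw [Nat.mod_eq_of_lt hj] at hval
    lia
  · rw [Nat.mod_eq_sub_mod hj, Nat.mod_eq_of_lt (by lia)] at hval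
    lia

lemma nxt_induction {n : ℕ} {C : Fin n → Prop} {i : Fin n} (hi : C i)
    (hnxt : ∀ j, C j → C (nxt j)) (j : Fin n) : C j := by
  have hiter : ∀ t, C (nxt^[t] i) := fun t => by
    induction t with
    | zero => exact hi
    | succ t ih => exact Function.iterate_succ_apply' nxt t i ▸ hnxt _ ih
  have hj : nxt^[j.1 + (n - i.1)] i = j := by
    apply Fin.ext
    rw [val_iterate_nxt, show i.1 + (j.1 + (n - i.1)) = j.1 + n by omega, Nat.add_mod_right,
      Nat.mod_eq_of_lt j.2]
  exact hj ▸ hiter _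

/-- `ψ` moves one step along the cycle `Fin k` at each place `j` of the cycle `Fin n` where `p j`
holds, and stays in place elsewhere. -/
structure IsTurnIndex {n k : ℕ} (p : Fin n → Prop) (ψ : Fin n → Fin k) : Prop where
  nxt_of_turn : ∀ j, p j → ψ (nxt j) = nxt (ψ j)
  nxt_of_not_turn : ∀ j, ¬ p j → ψ (nxt j) = ψ j

namespace IsTurnIndex

variable {n k : ℕ} {p : Fin n → Prop} {ψ : Fin n → Fin k}

lemma nxt_eq_or (h : IsTurnIndex p ψ) (j : Fin n) : ψ (nxt j) = ψ j ∨ ψ (nxt j) = nxt (ψ j) :=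
  (em (p j)).symm.imp (h.nxt_of_not_turn j) (h.nxt_of_turn j)

lemma nxt_ne_iff (h : IsTurnIndex p ψ) (hk : 2 ≤ k) (j : Fin n) : ψ (nxt j) ≠ ψ j ↔ p j := by
  refine ⟨not_imp_comm.1 (h.nxt_of_not_turn j), fun hj => ?_⟩
  rw [h.nxt_of_turn j hj]
  exact nxt_ne_self hk _

lemma exists_turn_eq (h : IsTurnIndex p ψ) (hp : ∃ j, p j) (c : Fin k) : ∃ j, p j ∧ ψ j = c := by
  obtain ⟨i, hi⟩ := hp
  refine nxt_induction (C := fun c => ∃ j, p j ∧ ψ j = c) ⟨i, hi, rfl⟩ ?_ c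
  rintro _ ⟨j, hj, rfl⟩
  by_contra! hno
  have hconst : ψ i = nxt (ψ j) := nxt_induction (C := fun l => ψ l = nxt (ψ j))
    (h.nxt_of_turn j hj) (fun l hl => (h.nxt_of_not_turn l fun hpl => hno l hpl hl).trans hl) i
  exact hno i hi hconst

lemma injOn (h : IsTurnIndex p ψ) (hp : ∃ j, p j) [DecidablePred p]
    (hcard : Finset.card {j | p j} = k) : InjOn ψ {j | p j} := by
  have hsurj : SurjOn ψ (Finset.filter p Finset.univ) (Finset.univ : Finset (Fin k)) :=
    fun c _ => by simpa using h.exists_turn_eq hp c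
  simpa using Finset.injOn_of_surjOn_of_card_le ψ (fun _ _ => Finset.mem_univ _) hsurj
    (by rw [hcard, Finset.card_fin])

/-- Running backwards round the cycle from any turn, `ψ` and `G` can only change at a turn. -/
lemma exists_turn_eq_and_eq {α : Type*} {G : Fin n → α} (h : IsTurnIndex p ψ) (hp : ∃ j, p j)
    (hG : ∀ j, ¬ p j → G (nxt j) = G j) (j : Fin n) : ∃ i, p i ∧ ψ i = ψ j ∧ G i = G j := by
  by_contra hj
  obtain ⟨i, hi⟩ := hp
  refine nxt_induction (C := fun j => ¬ ∃ i, p i ∧ ψ i = ψ j ∧ G i = G j) hj ?_ i ⟨i, hi, rfl, rfl⟩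
  rintro l hl ⟨i', hpi', hψ, hGi⟩
  by_cases hpl : p l
  · exact hl ⟨l, hpl, rfl, rfl⟩
  · exact hl ⟨i', hpi', hψ.trans (h.nxt_of_not_turn l hpl), hGi.trans (hG l hpl)⟩

lemma exists_factor {α : Type*} {G : Fin n → α} (h : IsTurnIndex p ψ) (hp : ∃ j, p j)
    [DecidablePred p] (hcard : Finset.card {j | p j} = k) (hG : ∀ j, ¬ p j → G (nxt j) = G j) :
    ∃ H : Fin k → α, ∀ j, H (ψ j) = G j := by
  choose turn hturn hψ using h.exists_turn_eq hp
  refine ⟨fun c => G (turn c), fun j => ?_⟩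
  obtain ⟨i, hi, hij, hGij⟩ := h.exists_turn_eq_and_eq hp hG j
  change G (turn (ψ j)) = G j
  rw [← hGij, h.injOn hp hcard (hturn (ψ j)) hi ((hψ (ψ j)).trans hij.symm)]

end IsTurnIndex

lemma exists_isTurnIndex {n k : ℕ} {p : Fin n → Prop} [DecidablePred p]
    (hcard : Finset.card {j | p j} = k) (hk : 0 < k) : ∃ ψ : Fin n → Fin k, IsTurnIndex p ψ := by
  let q t := ∃ h : t < n, p ⟨t, h⟩
  have hcount : Nat.count q n = k := by
    rw [Nat.count_eq_card_filter_range, ← hcard, ← Finset.card_map Fin.valEmbedding]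
    congr 1
    ext t
    simp [q, Fin.exists_iff]
  let c t := Nat.count q t % k
  have hnxt : ∀ j : Fin n, c (nxt j) = c (j + 1) := fun j => by
    rcases (Nat.succ_le_iff.2 j.2).lt_or_eq with hj | hj
    · rw [val_nxt_of_lt hj]
    · simp only [c, val_nxt_of_eq hj, ← Nat.succ_eq_add_one, hj, hcount, Nat.count_zero,
        Nat.mod_self, Nat.zero_mod]
  refine ⟨fun j => ⟨c j, Nat.mod_lt _ hk⟩, fun j hj => Fin.ext ?_, fun j hj => Fin.ext ?_⟩
  · change c (nxt j) = (c j + 1) % k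
    simp [hnxt, c, Nat.count_succ, q, hj]
  · change c (nxt j) = c j
    simp [hnxt, c, Nat.count_succ, q, hj]

/-! ### Concatenating paths into a cycle -/

section CyclicConcat

variable {r : ℕ} {m : Fin r → ℕ}

lemma forall_of_forall_finSigmaFinEquiv {p : Fin (∑ i, m i) → Prop}
    (h : ∀ i (t : Fin (m i)), p (finSigmaFinEquiv ⟨i, t⟩)) (j) : p j :=
  finSigmaFinEquiv.surjective.forall.2 (fun ⟨i, t⟩ => h i t) j

lemma nxt_finSigmaFinEquiv_of_lt {i : Fin r} {t t' : Fin (m i)} (h : t.1 + 1 = t'.1) :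
    nxt (finSigmaFinEquiv ⟨i, t⟩) = finSigmaFinEquiv ⟨i, t'⟩ := by
  have hval : (finSigmaFinEquiv ⟨i, t⟩).1 + 1 = (finSigmaFinEquiv ⟨i, t'⟩).1 := by
    simp only [finSigmaFinEquiv_apply, ← h, add_assoc]
  apply Fin.ext
  rw [val_nxt_of_lt (hval ▸ Fin.is_lt _), hval]

lemma sum_castLE {a : ℕ} (ha : a ≤ r) :
    ∑ l : Fin a, m (Fin.castLE ha l) = ∑ l with l.1 < a, m l := by
  refine (Finset.sum_map Finset.univ (Fin.castLEEmb ha) m).symm.trans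
    (Finset.sum_congr ?_ fun _ _ => rfl)
  ext l
  simpa using ⟨fun ⟨i, hi⟩ => hi ▸ i.2, fun hl => ⟨⟨l, hl⟩, rfl⟩⟩

lemma nxt_finSigmaFinEquiv_of_eq {i : Fin r} {t : Fin (m i)} (h : t.1 + 1 = m i)
    (h0 : 0 < m (nxt i)) : nxt (finSigmaFinEquiv ⟨i, t⟩) = finSigmaFinEquiv ⟨nxt i, ⟨0, h0⟩⟩ := by
  have hval : (finSigmaFinEquiv ⟨i, t⟩).1 + 1 = ∑ l with l.1 < i.1 + 1, m l := by
    rw [← sum_castLE i.2, Fin.sum_univ_castSucc, finSigmaFinEquiv_apply, add_assoc, h]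
    rfl
  have hnext : (finSigmaFinEquiv ⟨nxt i, ⟨0, h0⟩⟩).1 = ∑ l with l.1 < (nxt i).1, m l := by
    rw [← sum_castLE (nxt i).2.le, finSigmaFinEquiv_apply]
    rfl
  apply Fin.ext
  rcases (Nat.succ_le_iff.2 i.2).lt_or_eq with hi | hi
  · rw [val_nxt_of_lt hi] at hnext
    rw [hnext, ← hval]
    exact val_nxt_of_lt (hval.trans hnext.symm ▸ Fin.is_lt _)
  · rw [val_nxt_of_eq hi] at hnext
    rw [hnext, val_nxt_of_eq (hval.trans ?_)]
    · simp
    · simp [← Nat.succ_eq_add_one, hi]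

/-- The closed path obtained by running through `y i 0, …, y i (m i - 1)` for each `i` in turn. -/
def cyclicConcat {α : Type*} (m : Fin r → ℕ) (y : Fin r → ℕ → α) (j : Fin (∑ i, m i)) : α :=
  y (finSigmaFinEquiv.symm j).1 (finSigmaFinEquiv.symm j).2

lemma cyclicConcat_apply {α : Type*} (y : Fin r → ℕ → α) (i : Fin r) (t : Fin (m i)) :
    cyclicConcat m y (finSigmaFinEquiv ⟨i, t⟩) = y i t := by
  rw [cyclicConcat, Equiv.symm_apply_apply]

lemma cyclicConcat_nxt {α : Type*} {y : Fin r → ℕ → α} (hm : ∀ i, 0 < m i)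
    (hy : ∀ i, y i (m i) = y (nxt i) 0) (i : Fin r) (t : Fin (m i)) :
    cyclicConcat m y (nxt (finSigmaFinEquiv ⟨i, t⟩)) = y i (t + 1) := by
  rcases (Nat.succ_le_iff.2 t.2).lt_or_eq with ht | ht
  · rw [nxt_finSigmaFinEquiv_of_lt (t' := ⟨t + 1, ht⟩) rfl, cyclicConcat_apply]
  · rw [nxt_finSigmaFinEquiv_of_eq ht (hm _), cyclicConcat_apply, ← hy]
    exact congrArg _ ht.symm

lemma isTurnIndex_cyclicConcat (hm : ∀ i, 0 < m i) :
    IsTurnIndex (cyclicConcat m fun i t => t + 1 = m i) (cyclicConcat m fun i _ => i) := by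
  constructor <;> refine forall_of_forall_finSigmaFinEquiv fun i t ht => ?_ <;>
    rw [cyclicConcat_apply] at ht
  · rw [nxt_finSigmaFinEquiv_of_eq ht (hm _), cyclicConcat_apply, cyclicConcat_apply]
  · rw [nxt_finSigmaFinEquiv_of_lt (t' := ⟨t + 1, lt_of_le_of_ne t.2 ht⟩) rfl, cyclicConcat_apply,
      cyclicConcat_apply]

lemma card_cyclicConcat_turn (hm : ∀ i, 0 < m i) {p : Fin (∑ i, m i) → Prop} [DecidablePred p]
    (hp : ∀ i (t : Fin (m i)), p (finSigmaFinEquiv ⟨i, t⟩) ↔ t + 1 = m i) :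
    Finset.card {j | p j} = r := by
  let last i : Fin (∑ i, m i) := finSigmaFinEquiv ⟨i, ⟨m i - 1, Nat.sub_one_lt (hm i).ne'⟩⟩
  have hlast : Function.Injective last := fun i i' h =>
    congrArg Sigma.fst (finSigmaFinEquiv.injective h)
  have himage : Finset.univ.filter p = Finset.univ.image last := by
    ext j
    obtain ⟨⟨i, t⟩, rfl⟩ := finSigmaFinEquiv.surjective j
    have := hm i
    simp only [Finset.mem_filter, Finset.mem_univ, true_and, hp, Finset.mem_image, last,
      EmbeddingLike.apply_eq_iff_eq]
    constructor
    · intro ht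
      exact ⟨i, congrArg (Sigma.mk i) (Fin.ext (Nat.sub_eq_of_eq_add ht.symm))⟩
    · rintro ⟨i', h⟩
      cases h
      exact Nat.sub_add_cancel (hm i)
  rw [himage, Finset.card_image_of_injective _ hlast, Finset.card_fin]

end CyclicConcat

/-! ### The rim of three facets around a vertex -/

lemma IsVertexOf.eq_or_eq_of_mem_segment {P : Set E3} {a b w : E3} (hw : IsVertexOf w P)
    (he : IsFaceOf (segment ℝ a b) P) (h : w ∈ segment ℝ a b) : w = a ∨ w = b := by
  have := he.mem_extremePoints_iff.2 ⟨h, hw⟩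
  rwa [extremePoints_segment] at this

namespace IsBoundaryPolygon

variable {P F e : Set E3} {s : ℕ} {x : ℕ → E3}

lemma isVertexOf (h : IsBoundaryPolygon P F s x) {t : ℕ} (ht : t < s) : IsVertexOf (x t) P :=
  isVertexOf_of_edgeGraph_adj (h.isEdgeOf t ht)

lemma ne_zero (h : IsBoundaryPolygon P F s x) {t : ℕ} (ht : t + 1 < s) : x 0 ≠ x (t + 1) :=
  fun h0 => Nat.succ_ne_zero t (h.injOn (mem_Iio.2 (by lia)) ht h0).symm

lemma zero_notMem_segment (h : IsBoundaryPolygon P F s x) {t : ℕ} (ht : t + 2 < s) :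
    x 0 ∉ segment ℝ (x (t + 1)) (x (t + 2)) := by
  intro h0
  rcases (h.isVertexOf (by lia)).eq_or_eq_of_mem_segment (h.isEdgeOf (t + 1) (by lia)).1 h0
    with h0 | h0
  exacts [h.ne_zero (by lia) h0, h.ne_zero ht h0]

lemma exists_eq_of_zero_notMem (h : IsBoundaryPolygon P F s x) (he : IsEdgeOf e P) (heF : e ⊆ F)
    (h0 : x 0 ∉ e) : ∃ t, t + 2 < s ∧ e = segment ℝ (x (t + 1)) (x (t + 2)) := by
  obtain ⟨t, ht, rfl⟩ := h.exists_eq e he heF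
  have ht0 : t ≠ 0 := by
    rintro rfl
    exact h0 (left_mem_segment ℝ _ _)
  have hts : t + 1 ≠ s := fun hts => h0 (h.closed ▸ hts ▸ right_mem_segment ℝ _ _)
  obtain ⟨t, rfl⟩ := Nat.exists_eq_succ_of_ne_zero ht0
  exact ⟨t, by lia, rfl⟩

end IsBoundaryPolygon

/-- The facets `L 0`, `L 1`, `L 2` meet at `v`, and the closed path `u` traverses the edges of these
facets which miss `v`; its `j`-th edge is in `L (φ j)`. -/
structure IsRim (P : Set E3) (L : Fin 3 → Set E3) (v : E3) {n : ℕ} (u : Fin n → E3)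
    (φ : Fin n → Fin 3) : Prop where
  injective : Function.Injective u
  isEdgeOf : ∀ j, IsEdgeOf (segment ℝ (u j) (u (nxt j))) P
  subset : ∀ j, segment ℝ (u j) (u (nxt j)) ⊆ L (φ j)
  notMem : ∀ j, v ∉ segment ℝ (u j) (u (nxt j))
  exists_eq : ∀ i e, IsEdgeOf e P → e ⊆ L i → v ∉ e → ∃ j, e = segment ℝ (u j) (u (nxt j))
  nxt_eq_or : ∀ j, φ (nxt j) = φ j ∨ φ (nxt j) = nxt (φ j)
  surjective : Function.Surjective φ
  card_ne : Finset.card {j | φ (nxt j) ≠ φ j} = 3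

namespace IsStarAt

variable {P : Set E3} {v : E3} {F : Fin 3 → Set E3} {b : Fin 3 → E3}

lemma eq_or_eq_of_polygon_mem (hP : IsPolytope3 P) (hF : IsStarAt P v F b) {i i' : Fin 3} {s : ℕ}
    {x : ℕ → E3} (hx : IsBoundaryPolygon P (F i) s x) (hx0 : x 0 = v)
    (hxs : x (s - 1) = b (i + 2)) {t : ℕ} (ht : t + 2 < s) (hmem : x (t + 1) ∈ F i') :
    i' = i ∨ i' = i + 2 := by
  rcases finThree_cases i' i with rfl | rfl | rfl
  · exact .inl rfl
  · have hedge : F i ∩ F (i + 1) = segment ℝ v (b (i + 2)) := by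
      rw [← hF.inter_eq_segment (i + 2)]
      have hcyc : ∀ i : Fin 3, i + 2 + 1 = i ∧ i + 2 + 2 = i + 1 := by decide
      rw [(hcyc i).1, (hcyc i).2]
    have hmem' : x (t + 1) ∈ segment ℝ v (b (i + 2)) :=
      hedge ▸ ⟨hx.subset (t + 1) (by lia) (left_mem_segment ℝ _ _), hmem⟩
    have hface := (hF.toIsCornerAt.isEdgeOf_inter hP (finThree_add_one_ne i).symm).1
    rcases (hx.isVertexOf (by lia)).eq_or_eq_of_mem_segment (hedge ▸ hface) hmem' with h | h
    · exact absurd (hx0.trans h.symm) (hx.ne_zero (by lia))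
    · have := hx.injOn (mem_Iio.2 (by lia)) (mem_Iio.2 (by lia)) (h.trans hxs.symm)
      lia
  · exact .inr rfl

lemma eq_and_eq_of_polygon_eq (hP : IsPolytope3 P) (hF : IsStarAt P v F b) {s : Fin 3 → ℕ}
    {x : Fin 3 → ℕ → E3} (hx : ∀ i, IsBoundaryPolygon P (F i) (s i) (x i)) (hx0 : ∀ i, x i 0 = v)
    (hxs : ∀ i, x i (s i - 1) = b (i + 2)) {i i' : Fin 3} {t t' : ℕ} (ht : t + 2 < s i)
    (ht' : t' + 2 < s i') (h : x i (t + 1) = x i' (t' + 1)) : i = i' ∧ t = t' := by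
  have hmem : x i (t + 1) ∈ F i := (hx i).subset _ (by lia) (left_mem_segment ℝ _ _)
  have hmem' : x i' (t' + 1) ∈ F i' := (hx i').subset _ (by lia) (left_mem_segment ℝ _ _)
  have hi' := hF.eq_or_eq_of_polygon_mem hP (hx i) (hx0 i) (hxs i) ht (h ▸ hmem')
  have hi := hF.eq_or_eq_of_polygon_mem hP (hx i') (hx0 i') (hxs i') ht' (h ▸ hmem)
  have hcyc : ∀ i i' : Fin 3, i' = i ∨ i' = i + 2 → i = i' ∨ i = i' + 2 → i = i' := by decide
  obtain rfl := hcyc i i' hi' hi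
  exact ⟨rfl, Nat.succ_injective <|
    (hx i).injOn (mem_Iio.2 (by lia : t + 1 < s i)) (mem_Iio.2 (by lia : t' + 1 < s i)) h⟩

/-- The boundary polygon of `F i` from `v` ends where the one of `F (i + 1)` starts. Dropping `v`
from each of the three, they close up to a single cycle. -/
lemma isRim_cyclicConcat (hP : IsPolytope3 P) (hF : IsStarAt P v F b) {s : Fin 3 → ℕ}
    {x : Fin 3 → ℕ → E3} (hx : ∀ i, IsBoundaryPolygon P (F i) (s i) (x i)) (hx0 : ∀ i, x i 0 = v)
    (hx1 : ∀ i, x i 1 = b (i + 1)) (hxs : ∀ i, x i (s i - 1) = b (i + 2)) :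
    IsRim P F v (cyclicConcat (fun i => s i - 2) fun i t => x i (t + 1))
      (cyclicConcat _ fun i _ => i) := by
  let m i := s i - 2
  let y i t := x i (t + 1)
  have hs : ∀ i, 3 ≤ s i := fun i => (hx i).three_le
  have hm : ∀ i, 0 < m i := fun i => Nat.sub_pos_of_lt (hs i)
  have ht : ∀ {i} (t : Fin (m i)), t.1 + 2 < s i := fun t => Nat.add_lt_of_lt_sub t.2
  have hy : ∀ i, y i (m i) = y (nxt i) 0 := fun i => by
    have hnxt : i + 2 = nxt i + 1 := by revert i; decide
    have hmi : m i + 1 = s i - 1 := by have := hs i; lia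
    simp only [y, hmi, hxs, hx1, hnxt]
  have hu := cyclicConcat_apply (m := m) y
  have hunxt := cyclicConcat_nxt hm hy
  have hφ := isTurnIndex_cyclicConcat hm
  constructor
  case injective =>
    refine forall_of_forall_finSigmaFinEquiv fun i t =>
      forall_of_forall_finSigmaFinEquiv fun i' t' h => ?_
    rw [hu, hu] at h
    obtain ⟨rfl, htt'⟩ := hF.eq_and_eq_of_polygon_eq hP hx hx0 hxs (ht t) (ht t') h
    rw [Fin.ext htt']
  case isEdgeOf =>
    refine forall_of_forall_finSigmaFinEquiv fun i t => ?_
    rw [hu, hunxt]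
    exact (hx i).isEdgeOf _ (Nat.lt_of_succ_lt (ht t))
  case subset =>
    refine forall_of_forall_finSigmaFinEquiv fun i t => ?_
    rw [hu, hunxt, cyclicConcat_apply]
    exact (hx i).subset _ (Nat.lt_of_succ_lt (ht t))
  case notMem =>
    refine forall_of_forall_finSigmaFinEquiv fun i t => ?_
    rw [hu, hunxt, ← hx0 i]
    exact (hx i).zero_notMem_segment (ht t)
  case exists_eq =>
    intro i e he heF hve
    obtain ⟨t, ht, rfl⟩ := (hx i).exists_eq_of_zero_notMem he heF (hx0 i ▸ hve)
    exact ⟨finSigmaFinEquiv ⟨i, ⟨t, Nat.lt_sub_of_add_lt ht⟩⟩, by rw [hu, hunxt]⟩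
  case nxt_eq_or => exact hφ.nxt_eq_or
  case surjective => exact fun i => ⟨finSigmaFinEquiv ⟨i, ⟨0, hm i⟩⟩, cyclicConcat_apply _ _ _⟩
  case card_ne =>
    refine card_cyclicConcat_turn hm fun i t => ?_
    rw [hφ.nxt_ne_iff (by lia), cyclicConcat_apply]

lemma exists_isRim (hP : IsSimplePolytope3 P) (hF : IsStarAt P v F b) :
    ∃ (n : ℕ) (u : Fin n → E3) (φ : Fin n → Fin 3),
      n + 6 = facetEdges P (F 0) + facetEdges P (F 1) + facetEdges P (F 2) ∧ IsRim P F v u φ := by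
  choose s x hx hx0 hx1 hxs using hF.exists_isBoundaryPolygon hP
  refine ⟨_, _, _, ?_, hF.isRim_cyclicConcat hP.isPolytope3 hx hx0 hx1 hxs⟩
  have hs := fun i => (hx i).three_le
  rw [Fin.sum_univ_three, (hx 0).facetEdges_eq, (hx 1).facetEdges_eq, (hx 2).facetEdges_eq]
  have := hs 0
  have := hs 1
  have := hs 2
  lia

end IsStarAt

/-! ### The facets across the rim -/

/-- `G j` is the facet across the `j`-th edge of the closed path `u` from `L (φ j)`. -/
structure IsAcross (P : Set E3) (L : Fin 3 → Set E3) {n : ℕ} (u : Fin n → E3) (φ : Fin n → Fin 3)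
    (G : Fin n → Set E3) : Prop where
  isFacetOf : ∀ j, IsFacetOf (G j) P
  inter_eq : ∀ j, L (φ j) ∩ G j = segment ℝ (u j) (u (nxt j))

lemma IsCornerAt.eq_of_ne {P A B C D : Set E3} {v : E3} {F : Fin 3 → Set E3}
    (hF : IsCornerAt P v F) (hA : IsFacetOf A P) (hB : IsFacetOf B P) (hC : IsFacetOf C P)
    (hD : IsFacetOf D P) (hvA : v ∈ A) (hvB : v ∈ B) (hvC : v ∈ C) (hvD : v ∈ D) (hAB : A ≠ B)
    (hCA : C ≠ A) (hCB : C ≠ B) (hDA : D ≠ A) (hDB : D ≠ B) : C = D := by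
  obtain ⟨a, rfl⟩ := hF.exists_eq hA hvA
  obtain ⟨b, rfl⟩ := hF.exists_eq hB hvB
  obtain ⟨c, rfl⟩ := hF.exists_eq hC hvC
  obtain ⟨d, rfl⟩ := hF.exists_eq hD hvD
  have hcard : ∀ a b c d : Fin 3, a ≠ b → c ≠ a → c ≠ b → d ≠ a → d ≠ b → c = d := by decide
  exact congrArg F (hcard a b c d (ne_of_apply_ne F hAB) (ne_of_apply_ne F hCA)
    (ne_of_apply_ne F hCB) (ne_of_apply_ne F hDA) (ne_of_apply_ne F hDB))

namespace IsRim

variable {P : Set E3} {L : Fin 3 → Set E3} {v : E3} {n k : ℕ} {u : Fin n → E3} {φ : Fin n → Fin 3}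
  {G : Fin n → Set E3}

lemma card_eq (h : IsRim P L v u φ) : n = Finset.card {j | φ (nxt j) = φ j} + 3 := by
  have hcard := Finset.card_filter_add_card_filter_not (s := Finset.univ) fun j => φ (nxt j) = φ j
  rwa [Finset.card_fin, h.card_ne, eq_comm] at hcard

lemma three_le (h : IsRim P L v u φ) : 3 ≤ n :=
  h.card_eq ▸ Nat.le_add_left _ _

lemma isVertexOf (h : IsRim P L v u φ) (j : Fin n) : IsVertexOf (u j) P :=
  isVertexOf_of_edgeGraph_adj (h.isEdgeOf j)

lemma isSimpleEdgeCycleVia (h : IsRim P L v u φ) :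
    IsSimpleEdgeCycleVia P (⋃ j, segment ℝ (u j) (u (nxt j))) u :=
  ⟨h.three_le, h.injective, h.isVertexOf, h.isEdgeOf, rfl⟩

lemma edge_ne_nxt (h : IsRim P L v u φ) (j : Fin n) :
    segment ℝ (u j) (u (nxt j)) ≠ segment ℝ (u (nxt j)) (u (nxt (nxt j))) := by
  rw [segment_symm, Ne, segment_eq_segment_left_iff]
  exact fun heq => nxt_nxt_ne_self h.three_le j (h.injective heq).symm

lemma exists_isAcross (hP : IsSimplePolytope3 P) (hL : IsCornerAt P v L) (h : IsRim P L v u φ) :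
    ∃ G, IsAcross P L u φ G := by
  choose G hG _ hinter using fun j =>
    hP.exists_other_facet (h.isEdgeOf j) (hL.isFacetOf (φ j)) (h.subset j)
  exact ⟨G, hG, fun j => (hinter j).1⟩

lemma notMem_across (hL : IsCornerAt P v L) (h : IsRim P L v u φ) (hG : IsAcross P L u φ G)
    (j : Fin n) : v ∉ G j :=
  fun hv => h.notMem j (hG.inter_eq j ▸ ⟨hL.mem _, hv⟩)

lemma across_ne (hL : IsCornerAt P v L) (h : IsRim P L v u φ) (hG : IsAcross P L u φ G)
    (j : Fin n) (i : Fin 3) : G j ≠ L i :=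
  fun heq => h.notMem_across hL hG j (heq ▸ hL.mem i)

/-- Four facets through the vertex `u (nxt j)` of a simple polytope cannot be distinct. -/
lemma across_nxt_eq (hP : IsSimplePolytope3 P) (hL : IsCornerAt P v L) (h : IsRim P L v u φ)
    (hG : IsAcross P L u φ G) {j : Fin n} (hj : φ (nxt j) ≠ φ j) : G (nxt j) = G j := by
  obtain ⟨K, hK⟩ := hP.exists_isCornerAt (h.isVertexOf (nxt j))
  have hleft := (hG.inter_eq (nxt j)).superset (left_mem_segment ℝ _ _)
  have hright := (hG.inter_eq j).superset (right_mem_segment ℝ _ _)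
  exact hK.eq_of_ne (hL.isFacetOf _) (hL.isFacetOf _) (hG.isFacetOf _) (hG.isFacetOf _) hleft.1
    hright.1 hleft.2 hright.2 (hL.injective.ne hj) (h.across_ne hL hG _ _) (h.across_ne hL hG _ _)
    (h.across_ne hL hG _ _) (h.across_ne hL hG _ _)

lemma isEdgeOf_across_inter (hP : IsSimplePolytope3 P) (h : IsRim P L v u φ)
    (hG : IsAcross P L u φ G) {j : Fin n} (hj : φ (nxt j) = φ j) :
    IsEdgeOf (G j ∩ G (nxt j)) P := by
  refine hP.isEdgeOf_inter (hG.isFacetOf _) (hG.isFacetOf _) (fun heq => h.edge_ne_nxt j ?_)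
    ⟨u (nxt j), ?_, ?_⟩
  · rw [← hG.inter_eq, ← hG.inter_eq, hj, heq]
  · exact ((hG.inter_eq j).superset (right_mem_segment ℝ _ _)).2
  · exact ((hG.inter_eq (nxt j)).superset (left_mem_segment ℝ _ _)).2

lemma exists_isLoop_across (hP : IsSimplePolytope3 P) (hL : IsCornerAt P v L)
    (h : IsRim P L v u φ) (hG : IsAcross P L u φ G) (hk : 0 < k) (hn : n = k + 3) :
    ∃ (L' : Fin k → Set E3) (ψ : Fin n → Fin k), IsLoop P L' ∧
      IsTurnIndex (fun j => φ (nxt j) = φ j) ψ ∧ Function.Surjective ψ ∧ ∀ j, L' (ψ j) = G j := by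
  have hcard : Finset.card {j | φ (nxt j) = φ j} = k := by
    have := h.card_eq
    lia
  obtain ⟨j₀, hj₀⟩ := Finset.card_pos.1 (hk.trans_eq hcard.symm)
  have hp : ∃ j, φ (nxt j) = φ j := ⟨j₀, (Finset.mem_filter.1 hj₀).2⟩
  obtain ⟨ψ, hψ⟩ := exists_isTurnIndex hcard hk
  obtain ⟨L', hL'⟩ := hψ.exists_factor hp hcard fun j hj => h.across_nxt_eq hP hL hG hj
  have hsurj := hψ.exists_turn_eq hp
  refine ⟨L', ψ, ⟨hk, fun c => ?_, fun _ c => ?_⟩, hψ, fun c => (hsurj c).imp fun _ => And.right,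
    hL'⟩
  · obtain ⟨j, -, rfl⟩ := hsurj c
    exact hL' j ▸ hG.isFacetOf j
  · obtain ⟨j, hj, rfl⟩ := hsurj c
    rw [← hψ.nxt_of_turn j hj, hL', hL']
    exact h.isEdgeOf_across_inter hP hG hj

end IsRim

/-! ### The two sides of the rim -/

lemma connectedComponentIn_ne_of_isClosed {X : Type*} [TopologicalSpace X] {S γ A B : Set X}
    (hA : IsClosed A) (hB : IsClosed B) (hS : S ⊆ A ∪ B) (hAB : A ∩ B ⊆ γ) {x y : X}
    (hx : x ∈ S \ γ) (hxA : x ∈ A) (hy : y ∈ S \ γ) (hyB : y ∈ B) :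
    connectedComponentIn (S \ γ) x ≠ connectedComponentIn (S \ γ) y := by
  intro h
  have hsub := connectedComponentIn_subset (S \ γ) x
  obtain ⟨z, hz, hzAB⟩ := isPreconnected_closed_iff.1 isPreconnected_connectedComponentIn A B hA hB
    (fun z hz => hS (hsub hz).1) ⟨x, mem_connectedComponentIn hx, hxA⟩
    ⟨y, h ▸ mem_connectedComponentIn hy, hyB⟩
  exact (hsub hz).2 (hAB hzAB)

namespace IsFacetOf

variable {P K e : Set E3} {ι : Sort*} {γ : ι → Set E3}

lemma not_subset_of_isEdgeOf (hK : IsFacetOf K P) (he : IsEdgeOf e P) : ¬ K ⊆ e := fun h => by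
  have := setDim_mono h
  rw [hK.2, he.2] at this
  lia

lemma intrinsicInterior_subset_sdiff_iUnion (hK : IsFacetOf K P) (hγ : ∀ i, IsEdgeOf (γ i) P) :
    intrinsicInterior ℝ K ⊆ K \ ⋃ i, γ i := by
  refine fun x hx => ⟨intrinsicInterior_subset hx, fun hxγ => ?_⟩
  obtain ⟨i, hi⟩ := mem_iUnion.1 hxγ
  exact hK.not_subset_of_isEdgeOf (hγ i)
    (subset_of_mem_intrinsicInterior_of_isExtreme hK.subset (hγ i).1.2.2.2 hx hi)

lemma sdiff_iUnion_subset_connectedComponentIn (hP : IsPolytope3 P) (hK : IsFacetOf K P)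
    (hγ : ∀ i, IsEdgeOf (γ i) P) {x : E3} (hx : x ∈ K \ ⋃ i, γ i) :
    K \ ⋃ i, γ i ⊆ connectedComponentIn (frontier P \ ⋃ i, γ i) x := by
  have hconn := isPathConnected_sdiff_iUnion_of_isExtreme hK.subset hK.1.2.2.1 hK.1.1
    (fun i => (hγ i).1.2.2.2) (fun i => hK.not_subset_of_isEdgeOf (hγ i))
  exact hconn.isConnected.isPreconnected.subset_connectedComponentIn hx
    (sdiff_subset_sdiff_left fun y hy => hP.mem_frontier_iff.2 ⟨K, hK, hy⟩)

end IsFacetOf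

namespace IsRim

variable {P : Set E3} {L : Fin 3 → Set E3} {v : E3} {n k : ℕ} {u : Fin n → E3} {φ : Fin n → Fin 3}
  {G : Fin n → Set E3}

lemma notMem_iUnion (h : IsRim P L v u φ) : v ∉ ⋃ j, segment ℝ (u j) (u (nxt j)) :=
  fun hv => (mem_iUnion.1 hv).elim h.notMem

/-- The edge `G j ∩ G (nxt j)` lies in no third facet, so its relative interior misses the
rim. -/
lemma exists_mem_across_inter (hP : IsSimplePolytope3 P) (hL : IsCornerAt P v L)
    (h : IsRim P L v u φ) (hG : IsAcross P L u φ G) {j : Fin n} (hj : φ (nxt j) = φ j) :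
    ∃ z, z ∈ G j ∩ G (nxt j) ∧ z ∉ ⋃ l, segment ℝ (u l) (u (nxt l)) := by
  have he := h.isEdgeOf_across_inter hP hG hj
  obtain ⟨z, hz, hzint⟩ := he.1.exists_mem_intrinsicInterior
  refine ⟨z, hz, fun hzγ => ?_⟩
  obtain ⟨l, hl⟩ := mem_iUnion.1 hzγ
  have hsub : G j ∩ G (nxt j) ⊆ L (φ l) := (subset_of_mem_intrinsicInterior_of_isExtreme
    he.1.subset (h.isEdgeOf l).1.2.2.2 hzint hl).trans (h.subset l)
  obtain ⟨B, -, -, -, hB⟩ := hP.exists_other_facet he (hG.isFacetOf j) inter_subset_left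
  have hnxt : G (nxt j) = B := (hB _ (hG.isFacetOf _) inter_subset_right).resolve_left fun heq =>
    (hG.isFacetOf j).not_subset_of_isEdgeOf he (subset_inter subset_rfl heq.ge)
  rcases hB _ (hL.isFacetOf _) hsub with heq | heq
  · exact h.across_ne hL hG j _ heq.symm
  · exact h.across_ne hL hG (nxt j) _ (hnxt.trans heq.symm)

lemma across_sdiff_subset_connectedComponentIn (hP : IsSimplePolytope3 P) (hL : IsCornerAt P v L)
    (h : IsRim P L v u φ) (hG : IsAcross P L u φ G) {i : Fin n} {x : E3}
    (hx : x ∈ G i \ ⋃ l, segment ℝ (u l) (u (nxt l))) (j : Fin n) :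
    G j \ ⋃ l, segment ℝ (u l) (u (nxt l)) ⊆
      connectedComponentIn (frontier P \ ⋃ l, segment ℝ (u l) (u (nxt l))) x := by
  have hsub j {y} := (hG.isFacetOf j).sdiff_iUnion_subset_connectedComponentIn hP.isPolytope3
    h.isEdgeOf (x := y)
  refine nxt_induction (C := fun j => G j \ _ ⊆ connectedComponentIn _ x) (hsub i hx)
    (fun j hj => ?_) j
  by_cases hφ : φ (nxt j) = φ j
  · obtain ⟨z, ⟨hzj, hznxt⟩, hzγ⟩ := h.exists_mem_across_inter hP hL hG hφ
    rw [connectedComponentIn_eq (hj ⟨hzj, hzγ⟩)]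
    exact hsub (nxt j) ⟨hznxt, hzγ⟩
  · rwa [h.across_nxt_eq hP hL hG hφ]

lemma connectedComponentIn_ne (hP : IsSimplePolytope3 P) (hL : IsCornerAt P v L)
    (h : IsRim P L v u φ) (hG : IsAcross P L u φ G) {j : Fin n} {x : E3}
    (hx : x ∈ G j \ ⋃ l, segment ℝ (u l) (u (nxt l))) :
    connectedComponentIn (frontier P \ ⋃ l, segment ℝ (u l) (u (nxt l))) v ≠
      connectedComponentIn (frontier P \ ⋃ l, segment ℝ (u l) (u (nxt l))) x := by
  have hP' := hP.isPolytope3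
  let outer := {K | IsFacetOf K P ∧ v ∉ K}
  have hclosedL : IsClosed (⋃ i, L i) := isClosed_iUnion_of_finite fun i => (hL.isFacetOf i).1.2.1
  have hclosed : IsClosed (⋃₀ outer) := by
    rw [sUnion_eq_biUnion]
    exact (hP'.finite_setOf_isFacetOf.subset fun _ hK => hK.1).isClosed_biUnion
      fun _ hK => hK.1.1.2.1
  refine connectedComponentIn_ne_of_isClosed hclosedL hclosed ?_ ?_
    ⟨hP'.mem_frontier_iff.2 ⟨L 0, hL.isFacetOf 0, hL.mem 0⟩, h.notMem_iUnion⟩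
    (mem_iUnion.2 ⟨0, hL.mem 0⟩) ⟨hP'.mem_frontier_iff.2 ⟨G j, hG.isFacetOf j, hx.1⟩, hx.2⟩
    ⟨G j, ⟨hG.isFacetOf j, h.notMem_across hL hG j⟩, hx.1⟩
  · intro y hy
    obtain ⟨K, hK, hyK⟩ := hP'.mem_frontier_iff.1 hy
    by_cases hvK : v ∈ K
    · obtain ⟨i, rfl⟩ := hL.exists_eq hK hvK
      exact .inl (mem_iUnion.2 ⟨i, hyK⟩)
    · exact .inr ⟨K, ⟨hK, hvK⟩, hyK⟩
  · rintro y ⟨hyL, K, ⟨hK, hvK⟩, hyK⟩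
    obtain ⟨i, hyi⟩ := mem_iUnion.1 hyL
    have he := hP.isEdgeOf_inter (hL.isFacetOf i) hK (fun h => hvK (h ▸ hL.mem i)) ⟨y, hyi, hyK⟩
    obtain ⟨l, hl⟩ := h.exists_eq i _ he inter_subset_left fun hv => hvK hv.2
    exact mem_iUnion.2 ⟨l, hl ▸ ⟨hyi, hyK⟩⟩

lemma exists_borders (hP : IsSimplePolytope3 P) (hL : IsCornerAt P v L) (hloop : IsLoop P L)
    (h : IsRim P L v u φ) (hk : 0 < k) (hn : n = k + 3) :
    ∃ L' : Fin k → Set E3, Borders P L L' := by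
  have hP' := hP.isPolytope3
  obtain ⟨G, hG⟩ := h.exists_isAcross hP hL
  obtain ⟨L', ψ, hloop', hψ, hψsurj, hL'⟩ := h.exists_isLoop_across hP hL hG hk hn
  let j₀ : Fin n := ⟨0, by lia⟩
  obtain ⟨x, -, hx⟩ := (hG.isFacetOf j₀).1.exists_mem_intrinsicInterior
  have hint {K} (hK : IsFacetOf K P) := hK.intrinsicInterior_subset_sdiff_iUnion h.isEdgeOf
  have hxG := hint (hG.isFacetOf j₀) hx
  refine ⟨L', _, _, _, ⟨v, ⟨?_, h.notMem_iUnion⟩, rfl⟩, ⟨x, ⟨?_, hxG.2⟩, rfl⟩,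
    h.connectedComponentIn_ne hP hL hG hxG, ⟨hloop, fun i => ?_, n, u, φ, h.isSimpleEdgeCycleVia,
      h.subset, h.nxt_eq_or, h.surjective, fun _ => h.card_ne⟩,
    ⟨hloop', fun c => ?_, n, u, ψ, h.isSimpleEdgeCycleVia, fun j => ?_, hψ.nxt_eq_or, hψsurj,
      fun hk => ?_⟩⟩
  · exact hP'.mem_frontier_iff.2 ⟨L 0, hL.isFacetOf 0, hL.mem 0⟩
  · exact hP'.mem_frontier_iff.2 ⟨G j₀, hG.isFacetOf j₀, hxG.1⟩
  · exact (hint (hL.isFacetOf i)).trans ((hL.isFacetOf i).sdiff_iUnion_subset_connectedComponentIn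
      hP' h.isEdgeOf ⟨hL.mem i, h.notMem_iUnion⟩)
  · obtain ⟨j, rfl⟩ := hψsurj c
    rw [hL']
    exact (hint (hG.isFacetOf j)).trans
      (h.across_sdiff_subset_connectedComponentIn hP hL hG hxG j)
  · rw [hL', ← hG.inter_eq]
    exact inter_subset_right
  · simp only [hψ.nxt_ne_iff hk]
    have := h.card_eq
    lia

end IsRim

/-! ### Three-loops that are not belts -/

namespace IsLoop

variable {P : Set E3} {L : Fin 3 → Set E3}

lemma ne_nxt {k : ℕ} {L : Fin k → Set E3} (hL : IsLoop P L) (hk : 2 ≤ k) (i : Fin k) :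
    L i ≠ L (nxt i) := fun h =>
  (hL.2.1 i).not_subset_of_isEdgeOf (hL.2.2 hk i) (subset_inter subset_rfl h.subset)

lemma injective_of_three (hL : IsLoop P L) : Function.Injective L := by
  have hnxt : ∀ i j : Fin 3, i ≠ j → j = nxt i ∨ i = nxt j := by decide
  intro i j hij
  by_contra hne
  rcases hnxt i j hne with rfl | rfl
  · exact hL.ne_nxt (by norm_num) i hij
  · exact hL.ne_nxt (by norm_num) j hij.symm

lemma iInter_nonempty_of_not_isBelt (hL : IsLoop P L) (hnb : ¬ IsBelt P L) :
    (⋂ i, L i).Nonempty := by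
  have hcover : ∀ i j : Fin 3, j = i ∨ j = nxt i ∨ j = nxt (nxt i) := by decide
  contrapose! hnb
  refine ⟨le_rfl, hL, fun _ i => subset_eq_empty ?_ hnb, fun h => absurd h (by norm_num)⟩
  rintro y ⟨⟨h₀, h₁⟩, h₂⟩
  refine mem_iInter.2 fun j => ?_
  rcases hcover i j with rfl | rfl | rfl <;> assumption

lemma exists_isCornerAt (hP : IsSimplePolytope3 P) (hL : IsLoop P L)
    (hne : (⋂ i, L i).Nonempty) : ∃ v, IsCornerAt P v L := by
  obtain ⟨v, hvL, hv⟩ :=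
    hP.isPolytope3.exists_isVertexOf_mem (IsFaceOf.iInter (fun i => (hL.2.1 i).1) hne)
  have hsub : range L ⊆ {K | IsFacetOf K P ∧ v ∈ K} :=
    range_subset_iff.2 fun i => ⟨hL.2.1 i, mem_iInter.1 hvL i⟩
  have hcard : (range L).ncard = 3 := by
    rw [← image_univ, ncard_image_of_injective _ hL.injective_of_three, ncard_univ, Nat.card_fin]
  have hfin : {K | IsFacetOf K P ∧ v ∈ K}.Finite :=
    hP.isPolytope3.finite_setOf_isFacetOf.subset fun _ hK => hK.1
  exact ⟨v, hv, hL.injective_of_three,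
    eq_of_subset_of_ncard_le hsub (by rw [hcard, hP.2.2 v hv]) hfin⟩

end IsLoop

theorem three_loop_lemma_general (P : Set E3) (hP : IsSimplePolytope3 P) (L : Fin 3 → Set E3)
    (hL : IsLoop P L) (hnb : ¬ IsBelt P L) :
    (∃ v : E3, IsVertexOf v P ∧ L 0 ∩ L 1 ∩ L 2 = {v}) ∧
    (9 < facetEdges P (L 0) + facetEdges P (L 1) + facetEdges P (L 2) →
      ∃ L' : Fin (facetEdges P (L 0) + facetEdges P (L 1) + facetEdges P (L 2) - 9) →
        Set E3, Borders P L L') := by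
  obtain ⟨v, hv⟩ := hL.exists_isCornerAt hP (hL.iInter_nonempty_of_not_isBelt hnb)
  refine ⟨⟨v, hv.isVertexOf, ?_⟩, fun h9 => ?_⟩
  · rw [← hv.iInter_eq hP.isPolytope3]
    ext y
    simp [Fin.forall_fin_succ, and_assoc]
  · obtain ⟨b, hb⟩ := hv.exists_isStarAt hP.isPolytope3
    obtain ⟨n, u, φ, hn, hrim⟩ := hb.exists_isRim hP
    exact hrim.exists_borders hP hv hL (Nat.sub_pos_of_lt h9) (by lia)

/-- If a 3-loop in a simple 3-polytope with `p₃ = 0` is not a 3-belt, then its three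
facets meet in a vertex, and the loop borders a `k`-loop with
`k = sᵢ + sⱼ + sₖ - 9 ≥ 3`. -/
theorem three_loop_lemma (P : Set E3) (hP : IsSimplePolytope3 P) (h3 : pVec P 3 = 0)
    (L : Fin 3 → Set E3) (hL : IsLoop P L) (hnb : ¬ IsBelt P L) :
    (∃ v : E3, IsVertexOf v P ∧ L 0 ∩ L 1 ∩ L 2 = {v}) ∧
    3 ≤ facetEdges P (L 0) + facetEdges P (L 1) + facetEdges P (L 2) - 9 ∧
    ∃ L' : Fin (facetEdges P (L 0) + facetEdges P (L 1) + facetEdges P (L 2) - 9) →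
        Set E3, Borders P L L' := by
  have h4 i := hP.four_le_facetEdges h3 (hL.2.1 i)
  obtain ⟨hvertex, hborders⟩ := three_loop_lemma_general P hP L hL hnb
  have := h4 0
  have := h4 1
  have := h4 2
  exact ⟨hvertex, by lia, hborders (by lia)⟩
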